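/- Let Γ be the fundamental group of a graph of groups 𝒢 based on a finite graph G, where every vertex group Γ_v is countable and every edge group is amenable. Then for every integer n ≥ 1 there exists a linear map Θ : ⊕_{v∈V(G)} H_b^n(Γ_v) → H_b^n(Γ) which is an isometric embedding with respect to the norm ‖(φ_1,…,φ_k)‖_∞ = max_v ‖φ_v‖_∞ on the direct sum, and which is a right inverse to the map ⊕_{v∈V(G)} H(i_v) : H_b^n(Γ) → ⊕_{v∈V(G)} H_b^n(Γ_v) induced by the inclusions i_v : Γ_v ↪ Γ. -/

import Mathlib

noncomputable section

namespace GrpBC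

/-- The sup-"norm" of a real valued function (the infimum of its bounds). -/
def supN {S : Type*} (f : S → ℝ) : ℝ := sInf {C : ℝ | 0 ≤ C ∧ ∀ s, |f s| ≤ C}

/-- A group is amenable if it admits a left-invariant finitely additive
probability measure defined on all subsets. -/
def IsAmenable (G : Type*) [Group G] : Prop :=
  ∃ m : Set G → ℝ, (∀ A, 0 ≤ m A) ∧ m Set.univ = 1 ∧
    (∀ A B, Disjoint A B → m (A ∪ B) = m A + m B) ∧
    (∀ (g : G) (A : Set G), m ((g * ·) '' A) = m A)

/-- An amenable `Γ`-set: a (nonempty) set on which `Γ` acts with amenable stabilizers. -/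
def IsAmenableAction (Γ : Type*) [Group Γ] (S : Type*) [MulAction Γ S] : Prop :=
  Nonempty S ∧ ∀ s : S, IsAmenable (MulAction.stabilizer Γ s)

/-- The homogeneous coboundary operator on functions on `S^{n+1}`. -/
def gcob (S : Type*) (n : ℕ) : ((Fin (n + 1) → S) → ℝ) →ₗ[ℝ] ((Fin (n + 2) → S) → ℝ) where
  toFun f := fun g => ∑ i : Fin (n + 2), ((-1 : ℝ) ^ (i : ℕ)) * f (g ∘ i.succAbove)
  map_add' f g := by
    funext τ
    simp [mul_add, Finset.sum_add_distrib]
  map_smul' r f := by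
    funext τ
    simp [Finset.mul_sum]
    congr 1
    funext i
    ring

/-- Bounded functions on `S^{n+1}` (the module `ℓ^∞(S^{n+1})`). -/
def bddF (S : Type*) (n : ℕ) : Submodule ℝ ((Fin (n + 1) → S) → ℝ) where
  carrier := {f | ∃ C, ∀ g, |f g| ≤ C}
  zero_mem' := ⟨0, fun g => by simp⟩
  add_mem' := by
    rintro f g ⟨C, hC⟩ ⟨D, hD⟩
    exact ⟨C + D, fun τ => (abs_add_le _ _).trans (add_le_add (hC τ) (hD τ))⟩
  smul_mem' := by
    rintro r f ⟨C, hC⟩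
    refine ⟨|r| * C, fun τ => ?_⟩
    calc |(r • f) τ| = |r| * |f τ| := by rw [Pi.smul_apply, smul_eq_mul, abs_mul]
    _ ≤ |r| * C := mul_le_mul_of_nonneg_left (hC τ) (abs_nonneg r)

/-- Alternating functions on `S^{n+1}`: they transform under permutations of the arguments
according to the sign of the permutation. -/
def altF (S : Type*) (n : ℕ) : Submodule ℝ ((Fin (n + 1) → S) → ℝ) where
  carrier := {f | ∀ (g : Fin (n + 1) → S) (π : Equiv.Perm (Fin (n + 1))),
    f (g ∘ π) = ((Equiv.Perm.sign π : ℤ) : ℝ) * f g}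
  zero_mem' := fun g π => by simp
  add_mem' := by
    intro f g hf hg τ π
    simp only [Pi.add_apply, hf τ π, hg τ π]
    ring
  smul_mem' := by
    intro r f hf τ π
    simp only [Pi.smul_apply, hf τ π, smul_eq_mul]
    ring

/-- `Γ`-invariant functions on `S^{n+1}` (for the diagonal action). -/
def invF (Γ : Type*) [Group Γ] (S : Type*) [MulAction Γ S] (n : ℕ) :
    Submodule ℝ ((Fin (n + 1) → S) → ℝ) where
  carrier := {f | ∀ (γ : Γ) (g : Fin (n + 1) → S), f (fun i => γ • g i) = f g}
  zero_mem' := fun γ g => rfl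
  add_mem' := by
    intro f g hf hg γ τ
    simp [Pi.add_apply, hf γ τ, hg γ τ]
  smul_mem' := by
    intro r f hf γ τ
    simp [Pi.smul_apply, hf γ τ]

variable (Γ : Type*) [Group Γ]

/-- Invariant bounded cochains of the homogeneous resolution of `Γ`. -/
def grpC (n : ℕ) : Submodule ℝ ((Fin (n + 1) → Γ) → ℝ) := bddF Γ n ⊓ invF Γ Γ n

/-- Invariant bounded cocycles. -/
def grpZ (n : ℕ) : Submodule ℝ ((Fin (n + 1) → Γ) → ℝ) :=
  grpC Γ n ⊓ LinearMap.ker (gcob Γ n)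

/-- Invariant bounded coboundaries. -/
def grpB : ∀ n : ℕ, Submodule ℝ ((Fin (n + 1) → Γ) → ℝ)
  | 0 => ⊥
  | (m + 1) => (grpC Γ m).map (gcob Γ m)

/-- The bounded cohomology `H_b^n(Γ)` of `Γ` with trivial real coefficients. -/
def Hb (n : ℕ) := grpZ Γ n ⧸ ((grpB Γ n).comap (grpZ Γ n).subtype)

instance (n : ℕ) : AddCommGroup (Hb Γ n) := Submodule.Quotient.addCommGroup _
instance (n : ℕ) : Module ℝ (Hb Γ n) := Submodule.Quotient.module _

variable {Γ}

/-- The class of an invariant bounded cocycle in bounded cohomology. -/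
def HbClass {n : ℕ} (f : grpZ Γ n) : Hb Γ n := Submodule.Quotient.mk f

/-- The canonical `ℓ^∞`-seminorm on bounded cohomology. -/
def hbNorm {n : ℕ} (φ : Hb Γ n) : ℝ :=
  sInf {r : ℝ | ∃ f : grpZ Γ n, HbClass f = φ ∧ r = supN f.1}

/-! ### Restriction maps -/

variable {Γ₁ : Type*} [Group Γ₁]

/-- Pullback of homogeneous cochains along a group homomorphism. -/
def pbG (φ : Γ₁ →* Γ) (n : ℕ) : ((Fin (n + 1) → Γ) → ℝ) →ₗ[ℝ] ((Fin (n + 1) → Γ₁) → ℝ) where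
  toFun f := fun g => f (fun i => φ (g i))
  map_add' f g := rfl
  map_smul' r f := rfl

lemma pbG_mem_grpZ (φ : Γ₁ →* Γ) (n : ℕ) {f : (Fin (n + 1) → Γ) → ℝ}
    (hf : f ∈ grpZ Γ n) : pbG φ n f ∈ grpZ Γ₁ n := by
  obtain ⟨⟨⟨C, hC⟩, hinv⟩, hker⟩ := hf
  refine ⟨⟨⟨C, fun g => hC _⟩, fun γ g => ?_⟩, ?_⟩
  · show f (fun i => φ (γ * g i)) = f (fun i => φ (g i))
    have : (fun i => φ (γ * g i)) = fun i => φ γ • φ (g i) := by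
      funext i
      simp [smul_eq_mul]
    rw [this]
    exact hinv (φ γ) (fun i => φ (g i))
  · have h0 : gcob Γ n f = 0 := hker
    show gcob Γ₁ n (pbG φ n f) = 0
    funext g
    have : gcob Γ₁ n (pbG φ n f) g = gcob Γ n f (fun i => φ (g i)) := by
      show (∑ i : Fin (n + 2), ((-1 : ℝ) ^ (i : ℕ)) * f (fun j => φ ((g ∘ i.succAbove) j)))
        = ∑ i : Fin (n + 2), ((-1 : ℝ) ^ (i : ℕ)) * f ((fun j => φ (g j)) ∘ i.succAbove)
      rfl
    rw [this, h0]
    rfl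

lemma pbG_mem_grpB (φ : Γ₁ →* Γ) (n : ℕ) {f : (Fin (n + 1) → Γ) → ℝ}
    (hf : f ∈ grpB Γ n) : pbG φ n f ∈ grpB Γ₁ n := by
  cases n with
  | zero =>
    have : f = 0 := hf
    simp [this, grpB]
  | succ m =>
    obtain ⟨u, ⟨⟨C, hC⟩, hinv⟩, rfl⟩ := hf
    refine ⟨pbG φ m u, ⟨⟨C, fun g => hC _⟩, fun γ g => ?_⟩, ?_⟩
    · show u (fun i => φ (γ * g i)) = u (fun i => φ (g i))
      have : (fun i => φ (γ * g i)) = fun i => φ γ • φ (g i) := by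
        funext i
        simp [smul_eq_mul]
      rw [this]
      exact hinv (φ γ) (fun i => φ (g i))
    · rfl

/-- The restriction map `H_b^n(Γ) → H_b^n(Γ₁)` induced by a group homomorphism
`Γ₁ → Γ`. -/
def hbRes (φ : Γ₁ →* Γ) (n : ℕ) : Hb Γ n →ₗ[ℝ] Hb Γ₁ n :=
  Submodule.mapQ _ _ ((pbG φ n).restrict (fun f hf => pbG_mem_grpZ φ n hf))
    (fun f hf => pbG_mem_grpB φ n hf)



/-! ### The complex of alternating bounded functions on a `Γ`-set -/

variable (Γ : Type*) [Group Γ] (S : Type*) [MulAction Γ S]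

/-- Invariant alternating bounded cochains on `S^{n+1}`:
`ℓ^∞_alt(S^{n+1})^Γ`. -/
def altC (n : ℕ) : Submodule ℝ ((Fin (n + 1) → S) → ℝ) :=
  (bddF S n ⊓ altF S n) ⊓ invF Γ S n

/-- Invariant alternating bounded cocycles `Zℓ^∞_alt(S^{n+1})^Γ`. -/
def ZS (n : ℕ) : Submodule ℝ ((Fin (n + 1) → S) → ℝ) :=
  altC Γ S n ⊓ LinearMap.ker (gcob S n)

/-- Coboundaries in the invariant alternating bounded complex. -/
def BS : ∀ n : ℕ, Submodule ℝ ((Fin (n + 1) → S) → ℝ)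
  | 0 => ⊥
  | (m + 1) => (altC Γ S m).map (gcob S m)

/-- The cohomology of the complex `ℓ^∞_alt(S^{•+1})^Γ`. -/
def HS (n : ℕ) := ZS Γ S n ⧸ ((BS Γ S n).comap (ZS Γ S n).subtype)

instance (n : ℕ) : AddCommGroup (HS Γ S n) := Submodule.Quotient.addCommGroup _
instance (n : ℕ) : Module ℝ (HS Γ S n) := Submodule.Quotient.module _

variable {Γ S}

/-- The class of a cocycle in the cohomology of `ℓ^∞_alt(S^{•+1})^Γ`. -/
def HSClass {n : ℕ} (f : ZS Γ S n) : HS Γ S n := Submodule.Quotient.mk f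

/-- The `ℓ^∞`-seminorm on the cohomology of `ℓ^∞_alt(S^{•+1})^Γ`. -/
def hsNorm {n : ℕ} (φ : HS Γ S n) : ℝ :=
  sInf {r : ℝ | ∃ f : ZS Γ S n, HSClass f = φ ∧ r = supN f.1}

/-- Pullback of cochains along the orbit map `g ↦ g • s₀`. -/
def pbOrb (s₀ : S) (n : ℕ) : ((Fin (n + 1) → S) → ℝ) →ₗ[ℝ] ((Fin (n + 1) → Γ) → ℝ) where
  toFun f := fun g => f (fun i => g i • s₀)
  map_add' f g := rfl
  map_smul' r f := rfl

lemma pbOrb_mem_grpZ (s₀ : S) (n : ℕ) {f : (Fin (n + 1) → S) → ℝ}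
    (hf : f ∈ ZS Γ S n) : pbOrb (Γ := Γ) s₀ n f ∈ grpZ Γ n := by
  obtain ⟨⟨⟨⟨C, hC⟩, -⟩, hinv⟩, hker⟩ := hf
  refine ⟨⟨⟨C, fun g => hC _⟩, fun γ g => ?_⟩, ?_⟩
  · show f (fun i => (γ * g i) • s₀) = f (fun i => g i • s₀)
    have : (fun i => (γ * g i) • s₀) = fun i => γ • (g i • s₀) := by
      funext i
      rw [mul_smul]
    rw [this]
    exact hinv γ (fun i => g i • s₀)
  · have h0 : gcob S n f = 0 := hker
    show gcob Γ n (pbOrb (Γ := Γ) s₀ n f) = 0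
    funext g
    have : gcob Γ n (pbOrb (Γ := Γ) s₀ n f) g = gcob S n f (fun i => g i • s₀) := rfl
    rw [this, h0]
    rfl

lemma pbOrb_mem_grpB (s₀ : S) (n : ℕ) {f : (Fin (n + 1) → S) → ℝ}
    (hf : f ∈ BS Γ S n) : pbOrb (Γ := Γ) s₀ n f ∈ grpB Γ n := by
  cases n with
  | zero =>
    have : f = 0 := hf
    simp [this, grpB]
  | succ m =>
    obtain ⟨u, ⟨⟨⟨C, hC⟩, -⟩, hinv⟩, rfl⟩ := hf
    refine ⟨pbOrb (Γ := Γ) s₀ m u, ⟨⟨C, fun g => hC _⟩, fun γ g => ?_⟩, ?_⟩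
    · show u (fun i => (γ * g i) • s₀) = u (fun i => g i • s₀)
      have : (fun i => (γ * g i) • s₀) = fun i => γ • (g i • s₀) := by
        funext i
        rw [mul_smul]
      rw [this]
      exact hinv γ (fun i => g i • s₀)
    · rfl

/-- The canonical map `Zℓ^∞_alt(S^{•+1})^Γ → H_b^•(Γ)` (realized by pulling back along
the orbit map of a point `s₀ ∈ S`; for an amenable action the induced map does not depend
on this choice). -/
def canHb (s₀ : S) (n : ℕ) (f : ZS Γ S n) : Hb Γ n :=
  HbClass ⟨pbOrb (Γ := Γ) s₀ n f.1, pbOrb_mem_grpZ s₀ n f.2⟩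

/-- The map `HS → H_b` induced in cohomology by pulling back along an orbit map. -/
def hsToHb (s₀ : S) (n : ℕ) : HS Γ S n →ₗ[ℝ] Hb Γ n :=
  Submodule.mapQ _ _ ((pbOrb (Γ := Γ) s₀ n).restrict (fun f hf => pbOrb_mem_grpZ s₀ n hf))
    (fun f hf => pbOrb_mem_grpB s₀ n hf)

/-! ### Graphs of groups and their fundamental groups (Serre) -/

/-- A graph in the sense of Serre: oriented edges with a fixed-point free involution. -/
structure SerreGraph where
  V : Type
  E : Type
  bar : E → E
  t : E → V
  bar_bar : ∀ e, bar (bar e) = e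
  bar_ne : ∀ e, bar e ≠ e

namespace SerreGraph

/-- The origin of an edge. -/
def o (G : SerreGraph) (e : G.E) : G.V := G.t (G.bar e)

/-- `IsWalk p v w` : `p` is a walk of (oriented) edges from `v` to `w`. -/
def IsWalk (G : SerreGraph) : List G.E → G.V → G.V → Prop
  | [], v, w => v = w
  | e :: p, v, w => G.o e = v ∧ G.IsWalk p (G.t e) w

/-- A walk is reduced if it has no backtracking. -/
def Reduced (G : SerreGraph) (p : List G.E) : Prop :=
  p.Chain' (fun e f => f ≠ G.bar e)

/-- A spanning tree of a graph: a symmetric set of edges connecting all the vertices and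
containing no nontrivial reduced loop. -/
def IsSpanningTree (G : SerreGraph) (T : Set G.E) : Prop :=
  (∀ e ∈ T, G.bar e ∈ T) ∧
  (∀ v w : G.V, ∃ p : List G.E, (∀ e ∈ p, e ∈ T) ∧ G.IsWalk p v w) ∧
  (∀ (v : G.V) (p : List G.E), p ≠ [] → (∀ e ∈ p, e ∈ T) → G.IsWalk p v v → ¬ G.Reduced p)

end SerreGraph

/-- A graph of groups on a graph `G`: vertex groups, edge groups (with the identification
`Γ_e = Γ_{ē}` given by the isomorphisms `barEquiv`) and injective structure morphisms
`h_e : Γ_e → Γ_{t(e)}`. -/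
structure GraphOfGroups (G : SerreGraph) where
  Gv : G.V → Type
  grpV : ∀ v, Group (Gv v)
  Ge : G.E → Type
  grpE : ∀ e, Group (Ge e)
  barEquiv : ∀ e, Ge e ≃* Ge (G.bar e)
  barEquiv_coh : ∀ (e : G.E) (a : Ge e), HEq (barEquiv (G.bar e) (barEquiv e a)) a
  h : ∀ e, Ge e →* Gv (G.t e)
  h_inj : ∀ e, Function.Injective (h e)

attribute [instance] GraphOfGroups.grpV GraphOfGroups.grpE

namespace GraphOfGroups

variable {G : SerreGraph} (𝒢 : GraphOfGroups G)

/-- The generators of the fundamental group of a graph of groups: the elements of the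
vertex groups together with the edges of the graph. -/
abbrev gens : Type := ((v : G.V) × 𝒢.Gv v) ⊕ G.E

/-- The relations defining the fundamental group of a graph of groups with respect to a
spanning tree `T`: multiplication in each vertex group; `ē = e⁻¹`;
`e (h_{ē}(ā)) e⁻¹ = h_e(a)` for every edge `e` and `a ∈ Γ_e`; and `e = 1` for `e ∈ T`. -/
def rels (T : Set G.E) : Set (FreeGroup 𝒢.gens) :=
  {w | (∃ (v : G.V) (g h' : 𝒢.Gv v),
          w = FreeGroup.of (Sum.inl ⟨v, g⟩) * FreeGroup.of (Sum.inl ⟨v, h'⟩) *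
            (FreeGroup.of (Sum.inl ⟨v, g * h'⟩))⁻¹) ∨
       (∃ e : G.E, w = FreeGroup.of (Sum.inr e) * FreeGroup.of (Sum.inr (G.bar e))) ∨
       (∃ (e : G.E) (a : 𝒢.Ge e),
          w = FreeGroup.of (Sum.inr e) *
            FreeGroup.of (Sum.inl ⟨G.t (G.bar e), 𝒢.h (G.bar e) (𝒢.barEquiv e a)⟩) *
            (FreeGroup.of (Sum.inr e))⁻¹ * (FreeGroup.of (Sum.inl ⟨G.t e, 𝒢.h e a⟩))⁻¹) ∨
       (∃ e ∈ T, w = FreeGroup.of (Sum.inr e))}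

/-- The fundamental group of a graph of groups with respect to a spanning tree `T`
(Serre). -/
def pi1 (T : Set G.E) : Type := PresentedGroup (𝒢.rels T)

instance (T : Set G.E) : Group (𝒢.pi1 T) := by unfold pi1; infer_instance

lemma mk_rel_one {T : Set G.E} {r : FreeGroup 𝒢.gens} (hr : r ∈ 𝒢.rels T) :
    PresentedGroup.mk (𝒢.rels T) r = 1 :=
  (QuotientGroup.eq_one_iff r).2 (Subgroup.subset_normalClosure hr)

/-- The canonical inclusion of a vertex group into the fundamental group of a graph of
groups. -/
def vtxIncl (T : Set G.E) (v : G.V) : 𝒢.Gv v →* 𝒢.pi1 T :=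
  MonoidHom.mk' (fun g => (PresentedGroup.of (rels := 𝒢.rels T) (Sum.inl ⟨v, g⟩))) (by
    intro g h'
    have hr : (FreeGroup.of (Sum.inl ⟨v, g⟩) * FreeGroup.of (Sum.inl ⟨v, h'⟩) *
        (FreeGroup.of (Sum.inl (⟨v, g * h'⟩ : (v : G.V) × 𝒢.Gv v)))⁻¹) ∈ 𝒢.rels T :=
      Or.inl ⟨v, g, h', rfl⟩
    have h1 := 𝒢.mk_rel_one hr
    rw [map_mul, map_mul, map_inv] at h1
    exact (mul_inv_eq_one.mp h1).symm)

/-- The image in the fundamental group of an edge of the graph. -/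
def edgeElt (T : Set G.E) (e : G.E) : 𝒢.pi1 T :=
  PresentedGroup.of (rels := 𝒢.rels T) (Sum.inr e)

end GraphOfGroups

section P1
open Filter Topology

/-- The submodule of bounded functions. -/
def bd (X : Type*) : Submodule ℝ (X → ℝ) where
  carrier := {f | ∃ C, ∀ x, |f x| ≤ C}
  zero_mem' := ⟨0, fun g => by simp⟩
  add_mem' := by
    rintro f g ⟨C, hC⟩ ⟨D, hD⟩
    exact ⟨C + D, fun τ => (abs_add_le _ _).trans (add_le_add (hC τ) (hD τ))⟩
  smul_mem' := by
    rintro r f ⟨C, hC⟩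
    refine ⟨|r| * C, fun τ => ?_⟩
    calc |(r • f) τ| = |r| * |f τ| := by rw [Pi.smul_apply, smul_eq_mul, abs_mul]
    _ ≤ |r| * C := mul_le_mul_of_nonneg_left (hC τ) (abs_nonneg r)

/-- Means. -/
def IsMean {X : Type*} (m : (X → ℝ) →ₗ[ℝ] ℝ) : Prop :=
  m (fun _ => 1) = 1 ∧ ∀ (f : X → ℝ) (C : ℝ), (∀ x, |f x| ≤ C) → |m f| ≤ C

lemma IsMean.const {X : Type*} {m : (X → ℝ) →ₗ[ℝ] ℝ} (hm : IsMean m) (c : ℝ) :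
    m (fun _ => c) = c := by
  have : (fun _ : X => c) = c • (fun _ : X => (1 : ℝ)) := by funext x; simp
  rw [this, map_smul, hm.1]; simp

lemma exists_mean {X : Type*} (a : ℕ → (X → ℝ) → ℝ)
    (hb : ∀ k f C, (∀ x, |f x| ≤ C) → |a k f| ≤ C + 1 / ((k : ℝ) + 1))
    (hadd : ∀ f g : X → ℝ, f ∈ bd X → g ∈ bd X →
      Tendsto (fun k => a k (f + g) - (a k f + a k g)) atTop (𝓝 0))
    (hsmul : ∀ (c : ℝ) (f : X → ℝ), f ∈ bd X →
      Tendsto (fun k => a k (c • f) - c * a k f) atTop (𝓝 0))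
    (hone : Tendsto (fun k => a k (fun _ => 1)) atTop (𝓝 1)) :
    ∃ m : (X → ℝ) →ₗ[ℝ] ℝ, (∀ f ∈ bd X, ∀ C, (∀ x, |f x| ≤ C) → |m f| ≤ C) ∧ IsMean m ∧
      ∀ f g : X → ℝ, f ∈ bd X → g ∈ bd X →
        Tendsto (fun k => a k f - a k g) atTop (𝓝 0) → m f = m g := by
  classical
  have hlim : ∀ f : bd X, ∃ l, Tendsto (fun k => a k f.1) (hyperfilter ℕ : Filter ℕ) (𝓝 l) := by
    rintro ⟨f, C, hC⟩
    have hc : IsCompact (Set.Icc (-(C + 1)) (C + 1)) := isCompact_Icc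
    obtain ⟨l, -, hl⟩ := hc.ultrafilter_le_nhds ((hyperfilter ℕ).map (fun k => a k f)) (by
      rw [le_principal_iff]
      show ∀ᶠ k in (hyperfilter ℕ : Filter ℕ), a k f ∈ Set.Icc (-(C + 1)) (C + 1)
      refine Filter.Eventually.of_forall (fun k : ℕ => abs_le.1 ((hb k f C hC).trans ?_))
      have : 1 / ((k : ℝ) + 1) ≤ 1 := by
        rw [div_le_one (by positivity)]
        have : (0 : ℝ) ≤ k := by positivity
        linarith
      linarith)
    exact ⟨l, hl⟩
  choose L hL using hlim
  have hle : (hyperfilter ℕ : Filter ℕ) ≤ atTop := Nat.hyperfilter_le_atTop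
  let m₀ : bd X →ₗ[ℝ] ℝ :=
    { toFun := L
      map_add' := by
        intro f g
        have h1 := hL (f + g)
        have h2 := ((hadd f.1 g.1 f.2 g.2).mono_left hle).add ((hL f).add (hL g))
        refine tendsto_nhds_unique h1 (h2.congr' ?_ |>.trans (by simp))
        exact Eventually.of_forall fun k => by simp
      map_smul' := by
        intro c f
        have h1 := hL (c • f)
        have h2 := ((hsmul c f.1 f.2).mono_left hle).add ((hL f).const_mul c)
        refine tendsto_nhds_unique h1 (h2.congr' ?_ |>.trans (by simp))
        exact Eventually.of_forall fun k => by simp }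
  obtain ⟨m, hm⟩ := LinearMap.exists_extend m₀
  have hm' : ∀ f (hf : f ∈ bd X), m f = L ⟨f, hf⟩ := by
    intro f hf
    exact congrArg (fun T => T ⟨f, hf⟩) hm
  have hbound : ∀ f ∈ bd X, ∀ C, (∀ x, |f x| ≤ C) → |m f| ≤ C := by
    intro f hf C hC
    rw [hm' f hf]
    have h2 : Tendsto (fun k : ℕ => C + 1 / ((k : ℝ) + 1)) (hyperfilter ℕ : Filter ℕ) (𝓝 (C + 0)) :=
      (tendsto_one_div_add_atTop_nhds_zero_nat (𝕜 := ℝ)).const_add C |>.mono_left hle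
    rw [add_zero] at h2
    exact le_of_tendsto_of_tendsto (hL ⟨f, hf⟩).abs h2 (Eventually.of_forall fun k => hb k f C hC)
  refine ⟨m, hbound, ⟨?_, fun f C hC => hbound f ⟨C, hC⟩ C hC⟩, ?_⟩
  · have h1 : (fun _ : X => (1 : ℝ)) ∈ bd X := ⟨1, fun x => by simp⟩
    rw [hm' _ h1]
    refine tendsto_nhds_unique (hL ⟨_, h1⟩) ?_
    exact hone.mono_left hle
  · intro f g hf hg h
    rw [hm' f hf, hm' g hg]
    have h2 := (h.mono_left hle).add (hL ⟨g, hg⟩)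
    refine tendsto_nhds_unique (hL ⟨f, hf⟩) (h2.congr' ?_ |>.trans (by simp))
    exact Eventually.of_forall fun k => by simp

section amen
open MeasureTheory

/-- Integral of finite valued functions. -/
def Jint {X : Type*} (m : Set X → ℝ) (f : X → ℝ) : ℝ := ∑ᶠ r : ℝ, r * m (f ⁻¹' {r})

variable {X : Type*} {m : Set X → ℝ}

lemma Jint_eq (h0 : m ∅ = 0) {f : X → ℝ} (A : Finset ℝ) (hA : ∀ x, f x ∈ A) :
    Jint m f = ∑ r ∈ A, r * m (f ⁻¹' {r}) := by
  refine finsum_eq_sum_of_support_subset _ ?_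
  intro r hr
  by_contra hrA
  have : f ⁻¹' {r} = ∅ := by
    ext x
    simp only [Set.mem_preimage, Set.mem_singleton_iff, Set.mem_empty_iff_false, iff_false]
    rintro rfl
    exact hrA (hA x)
  simp [this, h0] at hr

lemma m_preimage (h0 : m ∅ = 0) (hadd : ∀ A B, Disjoint A B → m (A ∪ B) = m A + m B)
    (f : X → ℝ) (A : Finset ℝ) : m (f ⁻¹' A) = ∑ r ∈ A, m (f ⁻¹' {r}) := by
  classical
  induction A using Finset.induction_on with
  | empty => simp [h0]
  | insert r A hr ih =>
    rw [Finset.sum_insert hr, ← ih, ← hadd]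
    · congr 1
      ext x; simp
    · rw [Set.disjoint_left]
      intro x hx hx'
      simp at hx hx'
      subst hx
      exact hr hx'

lemma Jint_add (h0 : m ∅ = 0) (hadd : ∀ A B, Disjoint A B → m (A ∪ B) = m A + m B)
    {f g : X → ℝ} (hf : (Set.range f).Finite) (hg : (Set.range g).Finite) :
    Jint m (f + g) = Jint m f + Jint m g ∧ ∀ c : ℝ, Jint m (c • f) = c * Jint m f := by
  classical
  let _ : MeasurableSpace X := ⊤
  let T : Set X → ℝ →L[ℝ] ℝ := fun s => (m s) • ContinuousLinearMap.id ℝ ℝ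
  have hT : FinMeasAdditive (0 : Measure X) T := by
    intro s t _ _ _ _ hst
    simp only [T]
    rw [hadd s t hst, add_smul]
  have key : ∀ s : SimpleFunc X ℝ, Jint m s = s.setToSimpleFunc T := by
    intro s
    rw [Jint_eq h0 s.range (fun x => s.mem_range_self x)]
    unfold SimpleFunc.setToSimpleFunc
    refine Finset.sum_congr rfl fun r _ => ?_
    simp [T, mul_comm]
  let sf : SimpleFunc X ℝ := ⟨f, fun _ => trivial, hf⟩
  let sg : SimpleFunc X ℝ := ⟨g, fun _ => trivial, hg⟩
  have i0 : ∀ s : SimpleFunc X ℝ, Integrable s (0 : Measure X) := fun s => integrable_zero_measure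
  constructor
  · have := SimpleFunc.setToSimpleFunc_add T hT (i0 sf) (i0 sg)
    rw [← key, ← key, ← key] at this
    exact this
  · intro c
    have := SimpleFunc.setToSimpleFunc_smul_real T hT c (i0 sf)
    rw [← key, ← key] at this
    exact this

lemma Jint_bound (h0 : m ∅ = 0) (hadd : ∀ A B, Disjoint A B → m (A ∪ B) = m A + m B)
    (hpos : ∀ A, 0 ≤ m A) (h1 : m Set.univ = 1)
    {f : X → ℝ} (hf : (Set.range f).Finite) (C : ℝ) (hC : ∀ x, |f x| ≤ C) : |Jint m f| ≤ C := by
  classical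
  have hA : ∀ x, f x ∈ hf.toFinset := by intro x; simp
  rw [Jint_eq h0 _ hA]
  have hu : f ⁻¹' (hf.toFinset : Set ℝ) = Set.univ := by ext x; simp
  calc _ ≤ ∑ r ∈ hf.toFinset, |r * m (f ⁻¹' {r})| := Finset.abs_sum_le_sum_abs _ _
    _ ≤ ∑ r ∈ hf.toFinset, C * m (f ⁻¹' {r}) := by
      refine Finset.sum_le_sum fun r hr => ?_
      rw [abs_mul, abs_of_nonneg (hpos _)]
      refine mul_le_mul_of_nonneg_right ?_ (hpos _)
      simp at hr
      obtain ⟨x, rfl⟩ := hr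
      exact hC x
    _ = C := by rw [← Finset.mul_sum, ← m_preimage h0 hadd, hu, h1, mul_one]

/-- Truncation of a function. -/
def trunc (k : ℕ) (f : X → ℝ) : X → ℝ := fun x => (⌊((k : ℝ) + 1) * f x⌋ : ℝ) / ((k : ℝ) + 1)

lemma trunc_near (k : ℕ) (f : X → ℝ) (x : X) : |trunc k f x - f x| ≤ 1 / ((k : ℝ) + 1) := by
  have hk : (0 : ℝ) < (k : ℝ) + 1 := by positivity
  have h : trunc k f x - f x = ((⌊((k : ℝ) + 1) * f x⌋ : ℝ) - ((k : ℝ) + 1) * f x) / ((k : ℝ) + 1) := by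
    unfold trunc; field_simp
  rw [h, abs_div, abs_of_pos hk]
  gcongr
  have h1 := Int.floor_le (((k : ℝ) + 1) * f x)
  have h2 := Int.lt_floor_add_one (((k : ℝ) + 1) * f x)
  rw [abs_le]; constructor <;> linarith

lemma trunc_fin (k : ℕ) {f : X → ℝ} (hf : f ∈ bd X) : (Set.range (trunc k f)).Finite := by
  obtain ⟨C, hC⟩ := hf
  have hk : (0 : ℝ) < (k : ℝ) + 1 := by positivity
  refine ((Set.finite_Icc ⌊-(((k : ℝ) + 1) * C)⌋ ⌊((k : ℝ) + 1) * C⌋).image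
    (fun z : ℤ => (z : ℝ) / ((k : ℝ) + 1))).subset ?_
  rintro _ ⟨x, rfl⟩
  have := abs_le.1 (hC x)
  refine ⟨⌊((k : ℝ) + 1) * f x⌋, ⟨Int.floor_le_floor ?_, Int.floor_le_floor ?_⟩, rfl⟩ <;> nlinarith

lemma tendsto_aux (c : ℝ) : Tendsto (fun k : ℕ => c * (1 / ((k : ℝ) + 1))) atTop (𝓝 0) := by
  simpa using (tendsto_one_div_add_atTop_nhds_zero_nat (𝕜 := ℝ)).const_mul c

theorem amenable_mean {H : Type*} [Group H] (hH : IsAmenable H) :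
    ∃ μ : (H → ℝ) →ₗ[ℝ] ℝ, IsMean μ ∧
      ∀ f ∈ bd H, ∀ g : H, μ (fun x => f (g * x)) = μ f := by
  classical
  obtain ⟨m, hpos, h1, hadd, hinv⟩ := hH
  have h0 : m ∅ = 0 := by
    have := hadd ∅ ∅ (by simp)
    simp at this
    exact this
  have hsub : ∀ {f g : H → ℝ}, (Set.range f).Finite → (Set.range g).Finite →
      ∀ C, (∀ x, |f x - g x| ≤ C) → |Jint m f - Jint m g| ≤ C := by
    intro f g hf hg C hC
    have hg' : (Set.range ((-1 : ℝ) • g)).Finite := by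
      refine (hg.image (fun r => -r)).subset ?_
      rintro _ ⟨x, rfl⟩
      exact ⟨g x, ⟨x, rfl⟩, by simp⟩
    have e1 := (Jint_add h0 hadd hf hg').1
    rw [(Jint_add h0 hadd hg hg).2 (-1)] at e1
    have e2 : Jint m f - Jint m g = Jint m (f + (-1 : ℝ) • g) := by rw [e1]; ring
    rw [e2]
    refine Jint_bound h0 hadd hpos h1 ?_ C (fun x => by simpa [sub_eq_add_neg] using hC x)
    refine (Set.Finite.image2 (fun a b => a + b) hf hg').subset ?_
    rintro _ ⟨x, rfl⟩
    exact ⟨f x, ⟨x, rfl⟩, _, ⟨x, rfl⟩, rfl⟩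
  have hfadd : ∀ {f g : H → ℝ}, (Set.range f).Finite → (Set.range g).Finite →
      (Set.range (f + g)).Finite := by
    intro f g hf hg
    refine (Set.Finite.image2 (fun a b => a + b) hf hg).subset ?_
    rintro _ ⟨x, rfl⟩
    exact ⟨f x, ⟨x, rfl⟩, _, ⟨x, rfl⟩, rfl⟩
  have hfsmul : ∀ (c : ℝ) {f : H → ℝ}, (Set.range f).Finite → (Set.range (c • f)).Finite := by
    intro c f hf
    refine (hf.image (fun r => c * r)).subset ?_
    rintro _ ⟨x, rfl⟩
    exact ⟨f x, ⟨x, rfl⟩, by simp⟩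
  have hz : ∀ (c : ℝ) (u : ℕ → ℝ), (∀ k : ℕ, |u k| ≤ c * (1 / ((k : ℝ) + 1))) →
      Tendsto u atTop (𝓝 0) := fun c u hu => squeeze_zero_norm hu (tendsto_aux c)
  have hJc : ∀ c : ℝ, Jint m (fun _ => c) = c := by
    intro c
    rw [Jint_eq h0 {c} (fun x => by simp)]
    have : (fun _ : H => c) ⁻¹' {c} = Set.univ := by ext; simp
    simp [this, h1]
  obtain ⟨μ, -, hμ, hμ'⟩ := exists_mean (X := H) (fun k f => if f ∈ bd H then Jint m (trunc k f) else 0)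
    (by
      intro k f C hC
      have hf : f ∈ bd H := ⟨C, hC⟩
      simp only [if_pos hf]
      refine Jint_bound h0 hadd hpos h1 (trunc_fin k hf) _ (fun x => ?_)
      have e1 := trunc_near k f x
      have e2 := hC x
      calc |trunc k f x| = |f x + (trunc k f x - f x)| := by congr 1; ring
        _ ≤ _ := abs_add_le _ _
        _ ≤ _ := by linarith)
    (by
      intro f g hf hg
      refine hz 3 _ (fun k => ?_)
      simp only [if_pos hf, if_pos hg, if_pos ((bd H).add_mem hf hg)]
      rw [← (Jint_add h0 hadd (trunc_fin k hf) (trunc_fin k hg)).1]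
      refine hsub (trunc_fin k ((bd H).add_mem hf hg))
        (hfadd (trunc_fin k hf) (trunc_fin k hg)) _ (fun x => ?_)
      have e1 := abs_le.1 (trunc_near k f x)
      have e2 := abs_le.1 (trunc_near k g x)
      have e3 := abs_le.1 (trunc_near k (f + g) x)
      simp only [Pi.add_apply] at e3 ⊢
      rw [abs_le]; constructor <;> linarith)
    (by
      intro c f hf
      refine hz (1 + |c|) _ (fun k => ?_)
      simp only [if_pos hf, if_pos ((bd H).smul_mem c hf)]
      rw [← (Jint_add h0 hadd (trunc_fin k hf) (trunc_fin k hf)).2]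
      refine hsub (trunc_fin k ((bd H).smul_mem c hf)) (hfsmul c (trunc_fin k hf)) _ (fun x => ?_)
      have e1 := trunc_near k f x
      have e3 := trunc_near k (c • f) x
      simp only [Pi.smul_apply, smul_eq_mul] at e3 ⊢
      calc |trunc k (c • f) x - c * trunc k f x|
          = |(trunc k (c • f) x - c * f x) + (- c) * (trunc k f x - f x)| := by congr 1; ring
        _ ≤ |trunc k (c • f) x - c * f x| + |(- c) * (trunc k f x - f x)| := abs_add_le _ _
        _ ≤ 1 / ((k : ℝ) + 1) + |c| * (1 / ((k : ℝ) + 1)) := by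
          rw [abs_mul, abs_neg]; gcongr
        _ = _ := by ring)
    (by
      have h1' : (fun _ : H => (1 : ℝ)) ∈ bd H := ⟨1, fun x => by simp⟩
      simp only [if_pos h1']
      have : (fun k : ℕ => Jint m (trunc k (fun _ : H => (1 : ℝ)))) = fun k => 1 := by
        funext k
        have : trunc k (fun _ : H => (1 : ℝ)) = fun _ => 1 := by
          funext x
          have hk : (k : ℝ) + 1 ≠ 0 := by positivity
          have : ⌊(k : ℝ) + 1⌋ = (k : ℤ) + 1 := by simp
          simp [trunc, hk]
        rw [this, hJc]
      rw [this]; exact tendsto_const_nhds)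
  refine ⟨μ, hμ, fun f hf g => ?_⟩
  have hf' : (fun x => f (g * x)) ∈ bd H := by
    obtain ⟨C, hC⟩ := hf
    exact ⟨C, fun x => hC _⟩
  refine hμ' _ _ hf' hf ?_
  simp only [if_pos hf, if_pos hf']
  have : ∀ k : ℕ, Jint m (trunc k (fun x => f (g * x))) = Jint m (trunc k f) := by
    intro k
    unfold Jint
    refine finsum_congr fun r => ?_
    congr 1
    rw [← hinv g]
    congr 1
    ext x
    constructor
    · rintro ⟨y, hy, rfl⟩
      simpa [trunc] using hy
    · intro hx
      exact ⟨g⁻¹ * x, by simpa [trunc] using hx, by simp⟩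
  simp [this]
end amen
end P1

section P2
open Filter Topology

/-- A symmetric fully supported probability. -/
structure IsWt {Λ : Type*} [Group Λ] (μ : Λ → ℝ) : Prop where
  pos : ∀ s, 0 < μ s
  sum : HasSum μ 1
  symm : ∀ s, μ s⁻¹ = μ s

lemma exists_wt (Λ : Type*) [Group Λ] [Countable Λ] : ∃ μ : Λ → ℝ, IsWt μ := by
  haveI := Encodable.ofCountable Λ
  obtain ⟨f, hpos, c, hc, -⟩ := posSumOfEncodable one_pos Λ
  have hcpos : 0 < c := hc.tsum_eq ▸ hc.summable.tsum_pos (fun i => (hpos i).le) 1 (hpos 1)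
  have hc2 : HasSum (fun s : Λ => f s⁻¹) c := (Equiv.inv Λ).hasSum_iff.2 hc
  refine ⟨fun s => (f s + f s⁻¹) / (2 * c), fun s => ?_, ?_, fun s => ?_⟩
  · have := hpos s
    have := hpos s⁻¹
    positivity
  · have := (hc.add hc2).div_const (2 * c)
    have e : (c + c) / (2 * c) = 1 := by field_simp; ring
    rwa [e] at this
  · simp [add_comm]

/-- Weighted average. -/
def avg {Λ : Type*} (μ : Λ → ℝ) (φ : Λ → ℝ) : ℝ := ∑' s, μ s * φ s

section
variable {Λ : Type*} [Group Λ] {μ : Λ → ℝ} (hμ : IsWt μ)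
include hμ

lemma avg_summable {φ : Λ → ℝ} (hφ : φ ∈ bd Λ) : Summable (fun s => μ s * φ s) := by
  obtain ⟨C, hC⟩ := hφ
  refine Summable.of_norm_bounded (hμ.sum.summable.mul_right C) (fun s => ?_)
  rw [Real.norm_eq_abs, abs_mul, abs_of_pos (hμ.pos s)]
  exact mul_le_mul_of_nonneg_left (hC s) (hμ.pos s).le

lemma avg_mono {φ ψ : Λ → ℝ} (hφ : φ ∈ bd Λ) (hψ : ψ ∈ bd Λ) (h : ∀ s, φ s ≤ ψ s) :
    avg μ φ ≤ avg μ ψ :=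
  (avg_summable hμ hφ).tsum_le_tsum (fun s => mul_le_mul_of_nonneg_left (h s) (hμ.pos s).le)
    (avg_summable hμ hψ)

lemma avg_const (c : ℝ) : avg μ (fun _ => c) = c := by
  unfold avg
  rw [tsum_mul_right, hμ.sum.tsum_eq, one_mul]

lemma avg_add {φ ψ : Λ → ℝ} (hφ : φ ∈ bd Λ) (hψ : ψ ∈ bd Λ) :
    avg μ (φ + ψ) = avg μ φ + avg μ ψ := by
  unfold avg
  rw [← (avg_summable hμ hφ).tsum_add (avg_summable hμ hψ)]
  exact tsum_congr fun s => by simp [mul_add]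

lemma avg_smul (c : ℝ) (φ : Λ → ℝ) : avg μ (c • φ) = c * avg μ φ := by
  unfold avg
  rw [← tsum_mul_left]
  exact tsum_congr fun s => by simp; ring

lemma avg_bound {φ : Λ → ℝ} {C : ℝ} (hC : ∀ s, |φ s| ≤ C) : |avg μ φ| ≤ C := by
  have hφ : φ ∈ bd Λ := ⟨C, hC⟩
  have hc : ∀ c : ℝ, (fun _ : Λ => c) ∈ bd Λ := fun c => ⟨|c|, fun _ => le_rfl⟩
  rw [abs_le]
  constructor
  · have := avg_mono hμ (hc (-C)) hφ (fun s => (abs_le.1 (hC s)).1)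
    rwa [avg_const hμ] at this
  · have := avg_mono hμ hφ (hc C) (fun s => (abs_le.1 (hC s)).2)
    rwa [avg_const hμ] at this

lemma avg_inv (φ : Λ → ℝ) : avg μ (fun s => φ s⁻¹) = avg μ φ := by
  unfold avg
  rw [← (Equiv.inv Λ).tsum_eq]
  exact tsum_congr fun s => by simp [hμ.symm]

lemma mean_avg {X : Type*} {m : (X → ℝ) →ₗ[ℝ] ℝ} (hm : IsMean m) (F : Λ → X → ℝ) (C : ℝ)
    (hC : ∀ s x, |F s x| ≤ C) :
    m (fun x => avg μ (fun s => F s x)) = avg μ (fun s => m (F s)) := by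
  classical
  symm
  refine HasSum.tsum_eq ?_
  have hb : ∀ x, (fun s => F s x) ∈ bd Λ := fun x => ⟨C, fun s => hC s x⟩
  have hC0 : 0 ≤ C ∨ IsEmpty X := by
    by_cases h : Nonempty X
    · obtain ⟨x⟩ := h
      exact Or.inl ((abs_nonneg _).trans (hC 1 x))
    · exact Or.inr (not_nonempty_iff.1 h)
  rw [HasSum, tendsto_iff_norm_sub_tendsto_zero]
  have h0 : Tendsto (fun A : Finset Λ => (1 - ∑ s ∈ A, μ s) * C) (SummationFilter.unconditional Λ).filter (𝓝 0) := by
    have := (hμ.sum.const_sub 1).mul_const C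
    simpa using this
  refine squeeze_zero (fun _ => norm_nonneg _) (fun A => ?_) h0
  rw [norm_sub_rev, Real.norm_eq_abs]
  have e : m (fun x => avg μ (fun s => F s x)) - ∑ s ∈ A, μ s * m (F s)
      = m (fun x => avg μ (fun s => if s ∈ A then 0 else F s x)) := by
    have : (fun x => avg μ (fun s => F s x)) =
        (fun x => avg μ (fun s => if s ∈ A then 0 else F s x)) + ∑ s ∈ A, μ s • F s := by
      funext x
      have hb1 : (fun s => if s ∈ A then 0 else F s x) ∈ bd Λ := by
        refine ⟨C, fun s => ?_⟩
        have := hC s x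
        have := (abs_nonneg _).trans this
        dsimp only
        split_ifs <;> simp_all
      have hb2 : (fun s => if s ∈ A then F s x else 0) ∈ bd Λ := by
        refine ⟨C, fun s => ?_⟩
        have := hC s x
        have := (abs_nonneg _).trans this
        dsimp only
        split_ifs <;> simp_all
      have e1 : (fun s => F s x) = (fun s => if s ∈ A then 0 else F s x) +
          (fun s => if s ∈ A then F s x else 0) := by
        funext s; simp; split_ifs <;> simp
      rw [e1, avg_add hμ hb1 hb2]
      simp only [Pi.add_apply, Finset.sum_apply, Pi.smul_apply, smul_eq_mul]
      congr 1
      · unfold avg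
        rw [tsum_eq_sum (s := A) (fun s hs => by simp [hs])]
        exact Finset.sum_congr rfl fun s hs => by simp [hs]
    rw [this, map_add, map_sum]
    simp
  rw [e]
  refine hm.2 _ _ (fun x => ?_)
  have hCx : 0 ≤ C := (abs_nonneg _).trans (hC 1 x)
  have e2 : (1 - ∑ s ∈ A, μ s) * C = avg μ (fun s => if s ∈ A then 0 else C) := by
    have hb1 : (fun s : Λ => if s ∈ A then 0 else C) ∈ bd Λ :=
      ⟨C, fun s => by dsimp only; split_ifs <;> simp [abs_of_nonneg, hCx]⟩
    have hb2 : (fun s : Λ => if s ∈ A then C else 0) ∈ bd Λ :=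
      ⟨C, fun s => by dsimp only; split_ifs <;> simp [abs_of_nonneg, hCx]⟩
    have e1 : (fun _ : Λ => C) = (fun s => if s ∈ A then 0 else C) +
        (fun s => if s ∈ A then C else 0) := by
      funext s; simp; split_ifs <;> simp
    have e3 := avg_const hμ C
    rw [e1, avg_add hμ hb1 hb2] at e3
    have e4 : avg μ (fun s => if s ∈ A then C else 0) = (∑ s ∈ A, μ s) * C := by
      unfold avg
      rw [tsum_eq_sum (s := A) (fun s hs => by simp [hs]), Finset.sum_mul]
      exact Finset.sum_congr rfl fun s hs => by simp [hs]
    linarith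
  have hb1 : (fun s => if s ∈ A then 0 else F s x) ∈ bd Λ :=
    ⟨C, fun s => by dsimp only; split_ifs <;> simp [hCx, hC s x]⟩
  have hb3 : (fun s : Λ => if s ∈ A then 0 else C) ∈ bd Λ :=
      ⟨C, fun s => by dsimp only; split_ifs <;> simp [abs_of_nonneg, hCx]⟩
  rw [e2, abs_le]
  have hneg : avg μ (-fun s : Λ => if s ∈ A then 0 else C) = - avg μ (fun s => if s ∈ A then 0 else C) := by
    have := avg_smul hμ (-1) (fun s : Λ => if s ∈ A then 0 else C)
    rw [neg_one_smul] at this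
    rw [this]; ring
  constructor
  · rw [← hneg]
    refine avg_mono hμ ((bd Λ).neg_mem hb3) hb1 (fun s => ?_)
    have := (abs_le.1 (hC s x)).1
    simp only [Pi.neg_apply]
    split_ifs <;> simp [this]
  · refine avg_mono hμ hb1 hb3 (fun s => ?_)
    have := (abs_le.1 (hC s x)).2
    split_ifs <;> simp [this]

/-- The average as a mean. -/
lemma exists_avg_mean : ∃ m : (Λ → ℝ) →ₗ[ℝ] ℝ, IsMean m ∧ ∀ f ∈ bd Λ, m f = avg μ f := by
  let m₀ : bd Λ →ₗ[ℝ] ℝ :=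
    { toFun := fun f => avg μ f.1
      map_add' := fun f g => avg_add hμ f.2 g.2
      map_smul' := fun c f => avg_smul hμ c f.1 }
  obtain ⟨m, hm⟩ := LinearMap.exists_extend m₀
  have hm' : ∀ f (hf : f ∈ bd Λ), m f = avg μ f := by
    intro f hf
    exact congrArg (fun T => T ⟨f, hf⟩) hm
  refine ⟨m, ⟨?_, fun f C hC => ?_⟩, hm'⟩
  · rw [hm' _ ⟨1, fun x => by simp⟩, avg_const hμ]
  · rw [hm' _ ⟨C, hC⟩]
    exact avg_bound hμ hC

lemma avg_avg (F : Λ → Λ → ℝ) (C : ℝ) (hC : ∀ s x, |F s x| ≤ C) :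
    avg μ (fun x => avg μ (fun s => F s x)) = avg μ (fun s => avg μ (F s)) := by
  obtain ⟨m, hm, hm'⟩ := exists_avg_mean hμ
  have := mean_avg hμ hm F C hC
  rw [hm' _ ⟨C, fun x => avg_bound hμ (fun s => hC s x)⟩] at this
  rw [this]
  congr 1
  funext s
  exact hm' _ ⟨C, fun x => hC s x⟩

end
end P2

section P2b
open Filter Topology

/-- Left averaging. -/
def Lop {Λ : Type*} [Group Λ] (μ : Λ → ℝ) (f : Λ → ℝ) : Λ → ℝ := fun x => avg μ (fun s => f (s * x))
/-- Right averaging. -/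
def Rop {Λ : Type*} [Group Λ] (μ : Λ → ℝ) (f : Λ → ℝ) : Λ → ℝ := fun x => avg μ (fun s => f (x * s))

section
variable {Λ : Type*} [Group Λ] {μ : Λ → ℝ} (hμ : IsWt μ)
include hμ

lemma Lop_bound {f : Λ → ℝ} {C : ℝ} (hC : ∀ s, |f s| ≤ C) (x : Λ) : |Lop μ f x| ≤ C :=
  avg_bound hμ (fun s => hC _)

lemma Rop_bound {f : Λ → ℝ} {C : ℝ} (hC : ∀ s, |f s| ≤ C) (x : Λ) : |Rop μ f x| ≤ C :=
  avg_bound hμ (fun s => hC _)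

lemma Lit_bound {f : Λ → ℝ} {C : ℝ} (hC : ∀ s, |f s| ≤ C) (k : ℕ) (x : Λ) :
    |(Lop μ)^[k] f x| ≤ C := by
  induction k generalizing x with
  | zero => exact hC x
  | succ k ih => rw [Function.iterate_succ_apply']; exact Lop_bound hμ ih x

lemma Lop_add {f g : Λ → ℝ} (hf : f ∈ bd Λ) (hg : g ∈ bd Λ) : Lop μ (f + g) = Lop μ f + Lop μ g := by
  obtain ⟨C, hC⟩ := hf
  obtain ⟨D, hD⟩ := hg
  funext x
  exact avg_add hμ ⟨C, fun s => hC (s * x)⟩ ⟨D, fun s => hD (s * x)⟩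

lemma Lop_smul (c : ℝ) (f : Λ → ℝ) : Lop μ (c • f) = c • Lop μ f := by
  funext x
  exact avg_smul hμ c (fun s => f (s * x))

lemma Lit_add {f g : Λ → ℝ} (hf : f ∈ bd Λ) (hg : g ∈ bd Λ) (k : ℕ) :
    (Lop μ)^[k] (f + g) = (Lop μ)^[k] f + (Lop μ)^[k] g := by
  induction k with
  | zero => rfl
  | succ k ih =>
    obtain ⟨C, hC⟩ := hf
    obtain ⟨D, hD⟩ := hg
    rw [Function.iterate_succ_apply', Function.iterate_succ_apply', Function.iterate_succ_apply', ih,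
      Lop_add hμ ⟨C, Lit_bound hμ hC k⟩ ⟨D, Lit_bound hμ hD k⟩]

lemma Lit_smul (c : ℝ) (f : Λ → ℝ) (k : ℕ) :
    (Lop μ)^[k] (c • f) = c • (Lop μ)^[k] f := by
  induction k with
  | zero => rfl
  | succ k ih =>
    rw [Function.iterate_succ_apply', Function.iterate_succ_apply', ih, Lop_smul hμ]

lemma Lit_const (c : ℝ) (k : ℕ) :
    (Lop μ)^[k] (fun _ => c) = (fun _ => c) := by
  induction k with
  | zero => rfl
  | succ k ih =>
    rw [Function.iterate_succ_apply', ih]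
    funext x
    exact avg_const hμ c

lemma Lop_mono {f g : Λ → ℝ} (hf : f ∈ bd Λ) (hg : g ∈ bd Λ) (h : ∀ x, f x ≤ g x) (x : Λ) :
    Lop μ f x ≤ Lop μ g x := by
  obtain ⟨C, hC⟩ := hf
  obtain ⟨D, hD⟩ := hg
  exact avg_mono hμ ⟨C, fun s => hC (s * x)⟩ ⟨D, fun s => hD (s * x)⟩ (fun s => h _)

lemma LR_comm {f : Λ → ℝ} (hf : f ∈ bd Λ) : Lop μ (Rop μ f) = Rop μ (Lop μ f) := by
  obtain ⟨C, hC⟩ := hf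
  funext x
  have := avg_avg hμ (fun s t => f (t * x * s)) C (fun _ _ => hC _)
  unfold Lop Rop
  rw [this]
  simp [mul_assoc]

lemma LitR_comm {f : Λ → ℝ} (hf : f ∈ bd Λ) (k : ℕ) : (Lop μ)^[k] (Rop μ f) = Rop μ ((Lop μ)^[k] f) := by
  induction k with
  | zero => rfl
  | succ k ih =>
    obtain ⟨C, hC⟩ := hf
    rw [Function.iterate_succ_apply', Function.iterate_succ_apply', ih, LR_comm hμ ⟨C, Lit_bound hμ hC k⟩]

/-- Stationary mean. -/
lemma exists_stat : ∃ m : (Λ → ℝ) →ₗ[ℝ] ℝ, IsMean m ∧ ∀ f ∈ bd Λ, m (Lop μ f) = m f := by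
  refine Exists.elim (exists_mean (X := Λ)
    (fun k f => (1 / ((k : ℝ) + 1)) * ∑ j ∈ Finset.range (k + 1), (Lop μ)^[j] f 1) ?_ ?_ ?_ ?_) ?_
  rotate_right
  · rintro m ⟨-, hm, h⟩
    refine ⟨m, hm, fun f hf => ?_⟩
    obtain ⟨C, hC⟩ := hf
    refine h _ _ ⟨C, Lop_bound hμ hC⟩ ⟨C, hC⟩ ?_
    have h0 : Tendsto (fun k : ℕ => (1 / ((k : ℝ) + 1)) * (2 * C)) atTop (𝓝 0) := by
      simpa using (tendsto_one_div_add_atTop_nhds_zero_nat (𝕜 := ℝ)).mul_const (2 * C)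
    refine squeeze_zero_norm (fun k => ?_) h0
    rw [← mul_sub, ← Finset.sum_sub_distrib]
    have : ∑ j ∈ Finset.range (k + 1), ((Lop μ)^[j] (Lop μ f) 1 - (Lop μ)^[j] f 1)
        = (Lop μ)^[k + 1] f 1 - (Lop μ)^[0] f 1 :=
      Finset.sum_range_sub (fun j => (Lop μ)^[j] f 1) (k + 1)
    rw [this, norm_mul, Real.norm_eq_abs, Real.norm_eq_abs, abs_of_pos (by positivity)]
    refine mul_le_mul_of_nonneg_left ?_ (by positivity)
    have a := abs_le.1 (Lit_bound hμ hC (k + 1) 1)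
    have b := abs_le.1 (Lit_bound hμ hC 0 1)
    rw [abs_le]
    constructor <;> linarith [a.1, a.2, b.1, b.2]
  · intro k f C hC
    have : |∑ j ∈ Finset.range (k + 1), (Lop μ)^[j] f 1| ≤ (k + 1) * C := by
      refine (Finset.abs_sum_le_sum_abs _ _).trans ?_
      refine (Finset.sum_le_sum (fun j _ => Lit_bound hμ hC j 1)).trans ?_
      simp
    rw [abs_mul, abs_of_pos (by positivity)]
    have h1 : (1 / ((k : ℝ) + 1)) * |∑ j ∈ Finset.range (k + 1), (Lop μ)^[j] f 1| ≤ C := by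
      rw [one_div, inv_mul_le_iff₀ (by positivity)]
      exact this
    have : 0 < 1 / ((k : ℝ) + 1) := by positivity
    linarith
  · intro f g hf hg
    refine tendsto_const_nhds.congr (fun k => ?_)
    simp only [Lit_add hμ hf hg, Pi.add_apply, Finset.sum_add_distrib]
    ring
  · intro c f hf
    refine tendsto_const_nhds.congr (fun k => ?_)
    simp only [Lit_smul hμ, Pi.smul_apply, smul_eq_mul, ← Finset.mul_sum]
    ring
  · refine tendsto_const_nhds.congr (fun k => ?_)
    simp only [Lit_const hμ]
    simp
    field_simp

lemma avg_jensen {φ : Λ → ℝ} (hφ : φ ∈ bd Λ) : (avg μ φ) ^ 2 ≤ avg μ (fun s => φ s ^ 2) := by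
  obtain ⟨C, hC⟩ := hφ
  set c := avg μ φ with hc
  have hsq : (fun s => φ s ^ 2) ∈ bd Λ := ⟨C ^ 2, fun s => by
    rw [abs_pow]; exact pow_le_pow_left₀ (abs_nonneg _) (hC s) 2⟩
  have hk : ∀ c : ℝ, (fun _ : Λ => c) ∈ bd Λ := fun c => ⟨|c|, fun _ => le_rfl⟩
  have h1 : avg μ (fun s => φ s ^ 2) + (-2 * c) * avg μ φ + c ^ 2 = avg μ (fun s => (φ s - c) ^ 2) := by
    have e : (fun s => (φ s - c) ^ 2) = ((fun s => φ s ^ 2) + (-2 * c) • φ) + (fun _ => c ^ 2) := by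
      funext s; simp; ring
    rw [e, avg_add hμ ((bd Λ).add_mem hsq ((bd Λ).smul_mem _ ⟨C, hC⟩)) (hk _),
      avg_add hμ hsq ((bd Λ).smul_mem _ ⟨C, hC⟩), avg_smul hμ, avg_const hμ]
  have h2 : 0 ≤ avg μ (fun s => (φ s - c) ^ 2) :=
    tsum_nonneg (fun s => mul_nonneg (hμ.pos s).le (sq_nonneg _))
  rw [← hc] at h1
  nlinarith

lemma biharm {q : Λ → ℝ} (hq : q ∈ bd Λ) (hL : Lop μ q = q) (hR : Rop μ q = q) (g : Λ) :
    q g = q 1 := by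
  obtain ⟨C, hC⟩ := hq
  have hC0 : 0 ≤ C := (abs_nonneg _).trans (hC 1)
  have hk : ∀ c : ℝ, (fun _ : Λ => c) ∈ bd Λ := fun c => ⟨|c|, fun _ => le_rfl⟩
  set Q : Λ → ℝ := fun x => q x ^ 2 with hQ
  have hQb : ∀ x, |Q x| ≤ C ^ 2 := fun x => by
    rw [hQ, abs_pow]; exact pow_le_pow_left₀ (abs_nonneg _) (hC x) 2
  set D : Λ → ℝ := fun x => avg μ (fun s => (q (x * s) - q x) ^ 2) with hD
  have hdb : ∀ x s, |(q (x * s) - q x) ^ 2| ≤ (2 * C) ^ 2 := fun x s => by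
    rw [abs_pow]
    refine pow_le_pow_left₀ (abs_nonneg _) ?_ 2
    have a := abs_le.1 (hC (x * s))
    have b := abs_le.1 (hC x)
    rw [abs_le]
    constructor <;> linarith [a.1, a.2, b.1, b.2]
  have hDb : ∀ x, |D x| ≤ (2 * C) ^ 2 := fun x => avg_bound hμ (hdb x)
  have hDQ : Rop μ Q = Q + D := by
    funext x
    have e : (fun s => (q (x * s) - q x) ^ 2) =
        ((fun s => Q (x * s)) + (-2 * q x) • (fun s => q (x * s))) + (fun _ => q x ^ 2) := by
      funext s; simp [hQ]; ring
    have b1 : (fun s => Q (x * s)) ∈ bd Λ := ⟨C ^ 2, fun s => hQb _⟩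
    have b2 : (fun s => q (x * s)) ∈ bd Λ := ⟨C, fun s => hC _⟩
    have h1 : avg μ (fun s => q (x * s)) = q x := congrFun hR x
    simp only [hD, Pi.add_apply]
    rw [e, avg_add hμ ((bd Λ).add_mem b1 ((bd Λ).smul_mem _ b2)) (hk _),
      avg_add hμ b1 ((bd Λ).smul_mem _ b2), avg_smul hμ, avg_const hμ, h1]
    simp only [Rop, hQ]
    ring
  have hDL : ∀ x, D x ≤ Lop μ D x := by
    intro x
    have h1 := avg_avg hμ (fun s t => (q (t * x * s) - q (t * x)) ^ 2) ((2 * C) ^ 2)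
      (fun s t => hdb _ _)
    show D x ≤ avg μ (fun t => D (t * x))
    simp only [hD]
    rw [h1]
    refine avg_mono hμ ⟨_, hdb x⟩ ⟨(2 * C) ^ 2, fun s => avg_bound hμ (fun t => hdb _ _)⟩ (fun s => ?_)
    have b1 : (fun t => q (t * (x * s))) ∈ bd Λ := ⟨C, fun s => hC _⟩
    have b2 : (fun t => q (t * x)) ∈ bd Λ := ⟨C, fun s => hC _⟩
    have h2 : avg μ (fun t => q (t * (x * s))) = q (x * s) := congrFun hL (x * s)
    have h3 : avg μ (fun t => q (t * x)) = q x := congrFun hL x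
    have h4 : avg μ (fun t => q (t * x * s) - q (t * x)) = q (x * s) - q x := by
      have e : (fun t => q (t * x * s) - q (t * x)) = (fun t => q (t * (x * s))) + (-1 : ℝ) • (fun t => q (t * x)) := by
        funext t; simp [mul_assoc]; ring
      rw [e, avg_add hμ b1 ((bd Λ).smul_mem _ b2), avg_smul hμ, h2, h3]; ring
    rw [← h4]
    refine avg_jensen hμ ⟨2 * C, fun t => ?_⟩
    have a := abs_le.1 (hC (t * x * s))
    have b := abs_le.1 (hC (t * x))
    rw [abs_le]
    constructor <;> linarith [a.1, a.2, b.1, b.2]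
  have hDk : ∀ k x, D x ≤ (Lop μ)^[k] D x := by
    intro k
    induction k with
    | zero => exact fun x => le_rfl
    | succ k ih =>
      intro x
      rw [Function.iterate_succ_apply']
      exact (hDL x).trans (Lop_mono hμ ⟨_, hDb⟩ ⟨_, Lit_bound hμ hDb k⟩ ih x)
  have hstep : ∀ k, (Lop μ)^[k] Q 1 + D 1 ≤ (Lop μ)^[k + 1] Q 1 := by
    intro k
    have h1 : (Lop μ)^[k + 1] Q 1 = Rop μ ((Lop μ)^[k] Q) 1 := by
      rw [Function.iterate_succ_apply']
      simp [Lop, Rop]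
    rw [h1, ← LitR_comm hμ ⟨_, hQb⟩, hDQ, Lit_add hμ ⟨_, hQb⟩ ⟨_, hDb⟩]
    have := hDk k 1
    simp only [Pi.add_apply]
    linarith
  have hall : ∀ k : ℕ, Q 1 + k * D 1 ≤ (Lop μ)^[k] Q 1 := by
    intro k
    induction k with
    | zero => simp
    | succ k ih => have := hstep k; push_cast; linarith
  have hD1 : D 1 ≤ 0 := by
    by_contra hpos
    push Not at hpos
    obtain ⟨k, hk⟩ := exists_nat_gt ((C ^ 2) / D 1)
    rw [div_lt_iff₀ hpos] at hk
    have h1 := hall k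
    have h2 := (abs_le.1 (Lit_bound hμ hQb k 1)).2
    have h3 : 0 ≤ Q 1 := sq_nonneg _
    linarith
  have hsum : Summable (fun s => μ s * (q (1 * s) - q 1) ^ 2) := avg_summable hμ ⟨_, hdb 1⟩
  have h1 : μ g * (q (1 * g) - q 1) ^ 2 ≤ D 1 :=
    hsum.le_tsum g (fun s _ => mul_nonneg (hμ.pos s).le (sq_nonneg _))
  have h2 : (q (1 * g) - q 1) ^ 2 ≤ 0 := by
    by_contra hpos
    push Not at hpos
    have := mul_pos (hμ.pos g) hpos
    linarith
  have h3 : q (1 * g) - q 1 = 0 := pow_eq_zero_iff two_ne_zero |>.1 (le_antisymm h2 (sq_nonneg _))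
  rw [one_mul] at h3
  linarith

/-- the mean used for degree one vanishing -/
lemma stat_const {m : (Λ → ℝ) →ₗ[ℝ] ℝ} (hm : IsMean m) (hs : ∀ f ∈ bd Λ, m (Lop μ f) = m f)
    {q : Λ → ℝ} (hq : q ∈ bd Λ) (γ : Λ) :
    m (fun x => m (fun y => q (x⁻¹ * γ * y))) = m (fun x => m (fun y => q (x⁻¹ * y))) := by
  obtain ⟨C, hC⟩ := hq
  set Q : Λ → ℝ := fun γ => m (fun x => m (fun y => q (x⁻¹ * γ * y))) with hQ
  have hb : ∀ γ x, |m (fun y => q (x⁻¹ * γ * y))| ≤ C := fun γ x => hm.2 _ _ (fun y => hC _)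
  have hQb : ∀ γ, |Q γ| ≤ C := fun γ => hm.2 _ _ (hb γ)
  have hR : Rop μ Q = Q := by
    funext g
    show avg μ (fun s => m (fun x => m (fun y => q (x⁻¹ * (g * s) * y)))) = m (fun x => m (fun y => q (x⁻¹ * g * y)))
    rw [← mean_avg hμ hm _ C (fun s x => hb _ _)]
    congr 1
    funext x
    rw [← mean_avg hμ hm _ C (fun s x => hC _)]
    rw [← hs _ ⟨C, fun y => hC _⟩]
    simp only [mul_assoc]
    rfl
  have hL : Lop μ Q = Q := by
    funext g
    show avg μ (fun s => m (fun x => m (fun y => q (x⁻¹ * (s * g) * y)))) = m (fun x => m (fun y => q (x⁻¹ * g * y)))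
    rw [← mean_avg hμ hm _ C (fun s x => hb _ _)]
    rw [← hs _ ⟨C, hb g⟩]
    congr 1
    funext x
    unfold Lop
    rw [← avg_inv hμ]
    simp [mul_assoc]
  have := biharm hμ ⟨C, hQb⟩ hL hR γ
  simpa [hQ] using this
end
end P2b

section P3
open Filter Topology

lemma gcob_apply {S : Type*} (n : ℕ) (f : (Fin (n + 1) → S) → ℝ) (g : Fin (n + 2) → S) :
    gcob S n f g = ∑ i : Fin (n + 2), ((-1 : ℝ) ^ (i : ℕ)) * f (g ∘ i.succAbove) := rfl

/-- Cone operator. -/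
def cone {S : Type*} (x : S) (n : ℕ) : ((Fin (n + 1) → S) → ℝ) →ₗ[ℝ] ((Fin n → S) → ℝ) where
  toFun f := fun t => f (Fin.cons x t)
  map_add' f g := rfl
  map_smul' r f := rfl

lemma cone_apply {S : Type*} (x : S) (n : ℕ) (f : (Fin (n + 1) → S) → ℝ) (t : Fin n → S) :
    cone x n f t = f (Fin.cons x t) := rfl

lemma cons_succAbove_zero {S : Type*} {n : ℕ} (x : S) (t : Fin n → S) :
    (Fin.cons x t : Fin (n + 1) → S) ∘ (0 : Fin (n + 1)).succAbove = t := by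
  funext j; simp

lemma cons_succAbove_succ {S : Type*} {n : ℕ} (x : S) (t : Fin (n + 1) → S) (i : Fin (n + 1)) :
    (Fin.cons x t : Fin (n + 2) → S) ∘ i.succ.succAbove = Fin.cons x (t ∘ i.succAbove) := by
  funext j
  refine Fin.cases ?_ (fun j => ?_) j
  · simp
  · simp

lemma cone_gcob {S : Type*} (x : S) (n : ℕ) (f : (Fin (n + 2) → S) → ℝ) :
    cone x (n + 2) (gcob S (n + 1) f) = f - gcob S n (cone x (n + 1) f) := by
  funext t
  rw [cone_apply, gcob_apply, Fin.sum_univ_succ, cons_succAbove_zero]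
  simp only [Pi.sub_apply, gcob_apply, cons_succAbove_succ, cone_apply, Fin.val_succ, pow_succ]
  simp [Finset.sum_neg_distrib, sub_eq_add_neg]

lemma cone_gcob_zero {S : Type*} (x : S) (f : (Fin 1 → S) → ℝ) :
    cone x 1 (gcob S 0 f) = f - fun _ => f (fun _ => x) := by
  funext t
  rw [cone_apply, gcob_apply, Fin.sum_univ_succ, cons_succAbove_zero, Fin.sum_univ_one]
  have : (Fin.cons x t : Fin 2 → S) ∘ (Fin.succ (0 : Fin 1)).succAbove = fun _ => x := by
    funext j; fin_cases j; simp
  rw [this]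
  simp [sub_eq_add_neg]

lemma cone_inj {S : Type*} (n : ℕ) (f : (Fin (n + 1) → S) → ℝ) (h : ∀ x, cone x n f = 0) : f = 0 := by
  funext g
  rw [← Fin.cons_self_tail g]
  exact congrFun (h (g 0)) (Fin.tail g)

lemma gcob_const {S : Type*} (c : ℝ) : gcob S 0 (fun _ => c) = 0 := by
  funext g
  rw [gcob_apply]
  simp [Fin.sum_univ_succ]

lemma gcob_gcob {S : Type*} (n : ℕ) (f : (Fin (n + 1) → S) → ℝ) :
    gcob S (n + 1) (gcob S n f) = 0 := by
  induction n with
  | zero =>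
    refine cone_inj _ _ (fun x => ?_)
    rw [cone_gcob, cone_gcob_zero, map_sub, gcob_const]
    simp
  | succ n ih =>
    refine cone_inj _ _ (fun x => ?_)
    rw [cone_gcob, cone_gcob, map_sub, ih]
    simp

/-- Operators between cochain complexes. -/
structure IsOp (Λ : Type*) [Group Λ] {S X : Type*} [MulAction Λ S] [MulAction Λ X]
    (A : ∀ n, ((Fin (n + 1) → S) → ℝ) →ₗ[ℝ] ((Fin (n + 1) → X) → ℝ)) : Prop where
  comm : ∀ n f, gcob X n (A n f) = A (n + 1) (gcob S n f)
  const : ∀ c : ℝ, A 0 (fun _ => c) = fun _ => c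
  bound : ∀ n f (C : ℝ), (∀ s, |f s| ≤ C) → ∀ g, |A n f g| ≤ C
  equiv : ∀ n f, f ∈ bd (Fin (n + 1) → S) → ∀ (γ : Λ) (g : Fin (n + 1) → X),
    A n f (fun i => γ • g i) = A n (fun t => f (fun i => γ • t i)) g

lemma IsOp.comp {Λ : Type*} [Group Λ] {S X Y : Type*} [MulAction Λ S] [MulAction Λ X] [MulAction Λ Y]
    {A : ∀ n, ((Fin (n + 1) → S) → ℝ) →ₗ[ℝ] ((Fin (n + 1) → X) → ℝ)}
    {B : ∀ n, ((Fin (n + 1) → X) → ℝ) →ₗ[ℝ] ((Fin (n + 1) → Y) → ℝ)}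
    (hA : IsOp Λ A) (hB : IsOp Λ B) : IsOp Λ (fun n => (B n).comp (A n)) where
  comm n f := by simp [hB.comm, hA.comm]
  const c := by simp [hB.const, hA.const]
  bound n f C hC := hB.bound n _ C (hA.bound n f C hC)
  equiv n f hf γ g := by
    obtain ⟨C, hC⟩ := hf
    simp only [LinearMap.comp_apply]
    rw [hB.equiv n _ ⟨C, hA.bound n f C hC⟩]
    have e : (fun t => A n f (fun i => γ • t i)) = A n (fun t => f (fun i => γ • t i)) := by
      funext t
      exact hA.equiv n f ⟨C, hC⟩ γ t
    rw [e]

lemma IsOp.id (Λ : Type*) [Group Λ] (S : Type*) [MulAction Λ S] :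
    IsOp Λ (S := S) (X := S) (fun n => LinearMap.id) where
  comm n f := rfl
  const c := rfl
  bound n f C hC := hC
  equiv n f hf γ g := rfl

/-- Pullback along maps. -/
def pbM {S X : Type*} (p : X → S) (n : ℕ) : ((Fin (n + 1) → S) → ℝ) →ₗ[ℝ] ((Fin (n + 1) → X) → ℝ) where
  toFun f := fun g => f (fun i => p (g i))
  map_add' f g := rfl
  map_smul' r f := rfl

lemma IsOp.pbM {Λ : Type*} [Group Λ] {S X : Type*} [MulAction Λ S] [MulAction Λ X] (p : X → S)
    (hp : ∀ (γ : Λ) x, p (γ • x) = γ • p x) :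
    IsOp Λ (S := S) (X := X) (fun n => pbM p n) where
  comm n f := rfl
  const c := rfl
  bound n f C hC := fun g => hC _
  equiv n f hf γ g := by simp [GrpBC.pbM, hp]

lemma IsOp.inv {Λ : Type*} [Group Λ] {S X : Type*} [MulAction Λ S] [MulAction Λ X]
    {A : ∀ n, ((Fin (n + 1) → S) → ℝ) →ₗ[ℝ] ((Fin (n + 1) → X) → ℝ)} (hA : IsOp Λ A) {n : ℕ}
    {f : (Fin (n + 1) → S) → ℝ} (hf : f ∈ bd (Fin (n + 1) → S)) (hi : f ∈ invF Λ S n) :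
    A n f ∈ invF Λ X n := by
  intro γ g
  have e : (fun t : Fin (n + 1) → S => f (fun i => γ • t i)) = f := funext fun t => hi γ t
  rw [hA.equiv n f hf, e]

section homotopy
variable {Λ : Type*} [Group Λ] {S : Type*} [MulAction Λ S]

/-- Homotopy operators. -/
def Kop (s₀ : S) (D : ∀ n, ((Fin (n + 1) → S) → ℝ) →ₗ[ℝ] ((Fin (n + 1) → Λ) → ℝ)) :
    ∀ n, ((Fin (n + 2) → S) → ℝ) →ₗ[ℝ] ((Fin (n + 1) → Λ) → ℝ)
  | 0 => LinearMap.pi (fun g => (LinearMap.proj g).comp ((D 0).comp (cone (g 0 • s₀) 1)))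
  | (n + 1) => LinearMap.pi (fun g => (LinearMap.proj g).comp
      ((D (n + 1) - (gcob Λ n).comp (Kop s₀ D n)).comp (cone (g 0 • s₀) (n + 2))))

lemma Kop_zero (s₀ : S) (D : ∀ n, ((Fin (n + 1) → S) → ℝ) →ₗ[ℝ] ((Fin (n + 1) → Λ) → ℝ)) (f) (g) :
    Kop s₀ D 0 f g = D 0 (cone (g 0 • s₀) 1 f) g := rfl

lemma Kop_succ (s₀ : S) (D : ∀ n, ((Fin (n + 1) → S) → ℝ) →ₗ[ℝ] ((Fin (n + 1) → Λ) → ℝ)) (n) (f) (g) :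
    Kop s₀ D (n + 1) f g = D (n + 1) (cone (g 0 • s₀) (n + 2) f) g
      - gcob Λ n (Kop s₀ D n (cone (g 0 • s₀) (n + 2) f)) g := rfl

lemma Kop_htpy0 (s₀ : S) (D : ∀ n, ((Fin (n + 1) → S) → ℝ) →ₗ[ℝ] ((Fin (n + 1) → Λ) → ℝ))
    (hconst : ∀ c, D 0 (fun _ => c) = 0) (f) :
    Kop s₀ D 0 (gcob S 0 f) = D 0 f := by
  funext g
  rw [Kop_zero, cone_gcob_zero, map_sub, hconst]
  simp

lemma Kop_htpy (s₀ : S) (D : ∀ n, ((Fin (n + 1) → S) → ℝ) →ₗ[ℝ] ((Fin (n + 1) → Λ) → ℝ))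
    (hconst : ∀ c, D 0 (fun _ => c) = 0)
    (hcomm : ∀ n f, gcob Λ n (D n f) = D (n + 1) (gcob S n f)) (n : ℕ) (f) :
    Kop s₀ D (n + 1) (gcob S (n + 1) f) = D (n + 1) f - gcob Λ n (Kop s₀ D n f) := by
  induction n with
  | zero =>
    funext g
    rw [Kop_succ, cone_gcob, map_sub, map_sub, map_sub, Kop_htpy0 s₀ D hconst, hcomm]
    simp
  | succ n ih =>
    funext g
    rw [Kop_succ, cone_gcob, map_sub, map_sub, map_sub, ih, map_sub, gcob_gcob, hcomm]
    simp

lemma gcob_bd {X : Type*} (n : ℕ) {f : (Fin (n + 1) → X) → ℝ} (hf : f ∈ bd (Fin (n + 1) → X)) :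
    gcob X n f ∈ bd (Fin (n + 2) → X) := by
  obtain ⟨C, hC⟩ := hf
  refine ⟨∑ i : Fin (n + 2), C, fun g => ?_⟩
  rw [gcob_apply]
  refine (Finset.abs_sum_le_sum_abs _ _).trans (Finset.sum_le_sum fun i _ => ?_)
  rw [abs_mul, abs_pow]
  simpa using hC _

lemma gcob_bound {X : Type*} (n : ℕ) {f : (Fin (n + 1) → X) → ℝ} {C : ℝ} (hC : ∀ g, |f g| ≤ C) (g) :
    |gcob X n f g| ≤ (n + 2) * C := by
  have : (n + 2) * C = ∑ i : Fin (n + 2), C := by simp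
  rw [this, gcob_apply]
  refine (Finset.abs_sum_le_sum_abs _ _).trans (Finset.sum_le_sum fun i _ => ?_)
  rw [abs_mul, abs_pow]
  simpa using hC _

lemma homotopy_mem (s₀ : S) {A B : ∀ n, ((Fin (n + 1) → S) → ℝ) →ₗ[ℝ] ((Fin (n + 1) → Λ) → ℝ)}
    (hA : IsOp Λ A) (hB : IsOp Λ B) {n : ℕ} {f : (Fin (n + 2) → S) → ℝ}
    (hf : f ∈ bd (Fin (n + 2) → S)) (hi : f ∈ invF Λ S (n + 1)) (hz : gcob S (n + 1) f = 0) :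
    A (n + 1) f - B (n + 1) f ∈ grpB Λ (n + 1) := by
  set D : ∀ n, ((Fin (n + 1) → S) → ℝ) →ₗ[ℝ] ((Fin (n + 1) → Λ) → ℝ) := fun n => A n - B n with hD
  have hconst : ∀ c, D 0 (fun _ => c) = 0 := by
    intro c; simp [hD, hA.const, hB.const]
  have hcomm : ∀ n f, gcob Λ n (D n f) = D (n + 1) (gcob S n f) := by
    intro n f; simp [hD, hA.comm, hB.comm]
  have hbound : ∀ n f (C : ℝ), (∀ s, |f s| ≤ C) → ∀ g, |D n f g| ≤ 2 * C := by
    intro n f C hC g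
    have a := abs_le.1 (hA.bound n f C hC g)
    have b := abs_le.1 (hB.bound n f C hC g)
    simp only [hD, LinearMap.sub_apply, Pi.sub_apply, abs_le]
    constructor <;> linarith [a.1, a.2, b.1, b.2]
  have hequiv : ∀ n f, f ∈ bd (Fin (n + 1) → S) → ∀ (γ : Λ) (g : Fin (n + 1) → Λ),
    D n f (fun i => γ • g i) = D n (fun t => f (fun i => γ • t i)) g := by
    intro n f hf γ g
    simp only [hD, LinearMap.sub_apply, Pi.sub_apply, hA.equiv n f hf, hB.equiv n f hf]
  have hKb : ∀ n (C : ℝ), ∃ C' : ℝ, ∀ f, (∀ s, |f s| ≤ C) → ∀ g, |Kop s₀ D n f g| ≤ C' := by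
    intro n
    induction n with
    | zero => exact fun C => ⟨2 * C, fun f hC g => hbound 0 _ C (fun s => hC _) g⟩
    | succ n ih =>
      intro C
      obtain ⟨C', hC'⟩ := ih C
      refine ⟨2 * C + (n + 2) * C', fun f hC g => ?_⟩
      rw [Kop_succ]
      have a := hbound (n + 1) (cone (g 0 • s₀) (n + 2) f) C (fun s => hC _) g
      have b := gcob_bound n (hC' (cone (g 0 • s₀) (n + 2) f) (fun s => hC _)) g
      exact (abs_sub _ _).trans (add_le_add a b)
  have hKe : ∀ n f, f ∈ bd (Fin (n + 2) → S) → ∀ (γ : Λ) (g : Fin (n + 1) → Λ),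
    Kop s₀ D n f (fun i => γ • g i) = Kop s₀ D n (fun t => f (fun i => γ • t i)) g := by
    have hcone : ∀ n (f : (Fin (n + 1) → S) → ℝ) (γ : Λ) (x : S),
        (fun t => cone ((γ • x)) n f (fun i => γ • t i)) = cone x n (fun t => f (fun i => γ • t i)) := by
      intro n f γ x
      funext t
      simp only [cone_apply]
      congr 1
      funext i
      refine Fin.cases ?_ (fun i => ?_) i <;> simp
    intro n
    induction n with
    | zero =>
      rintro f ⟨C, hC⟩ γ g
      have hcb : ∀ x, cone x 1 f ∈ bd (Fin 1 → S) := fun x => ⟨C, fun t => hC (Fin.cons x t)⟩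
      rw [Kop_zero, Kop_zero, hequiv _ _ (hcb _)]
      simp only [smul_eq_mul, mul_smul]
      rw [hcone]
    | succ n ih =>
      rintro f ⟨C, hC⟩ γ g
      have hcb : ∀ x, cone x (n + 2) f ∈ bd (Fin (n + 2) → S) := fun x => ⟨C, fun t => hC (Fin.cons x t)⟩
      rw [Kop_succ, Kop_succ, hequiv _ _ (hcb _)]
      simp only [smul_eq_mul, mul_smul]
      rw [hcone]
      congr 1
      simp only [gcob_apply]
      refine Finset.sum_congr rfl fun i _ => ?_
      congr 1
      have := ih (cone (γ • g 0 • s₀) (n + 2) f) (hcb _) γ (g ∘ i.succAbove)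
      rw [hcone] at this
      exact this
  obtain ⟨C, hC⟩ := hf
  refine ⟨Kop s₀ D n f, ⟨?_, ?_⟩, ?_⟩
  · obtain ⟨C', hC'⟩ := hKb n C
    exact ⟨C', hC' f hC⟩
  · intro γ g
    have e : (fun t : Fin (n + 2) → S => f (fun i => γ • t i)) = f := funext fun t => hi γ t
    rw [hKe n f ⟨C, hC⟩ γ g, e]
  · have := Kop_htpy s₀ D hconst hcomm n f
    rw [hz, map_zero, eq_comm, sub_eq_zero] at this
    rw [← this]
    rfl
end homotopy
end P3

section P3b
open Filter Topology

/-- Iterated means. -/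
def mint {X : Type*} : ∀ n, (Fin n → ((X → ℝ) →ₗ[ℝ] ℝ)) → (((Fin n → X) → ℝ) →ₗ[ℝ] ℝ)
  | 0, _ => LinearMap.proj (fun i => i.elim0)
  | (n + 1), ms => (ms 0).comp (LinearMap.pi fun x => (mint n (Fin.tail ms)).comp (cone x n))

lemma mint_succ {X : Type*} (n : ℕ) (ms : Fin (n + 1) → ((X → ℝ) →ₗ[ℝ] ℝ)) (f) :
    mint (n + 1) ms f = ms 0 (fun x => mint n (Fin.tail ms) (fun t => f (Fin.cons x t))) := rfl

lemma mint_bound {X : Type*} (n : ℕ) (ms : Fin n → ((X → ℝ) →ₗ[ℝ] ℝ)) (hms : ∀ i, IsMean (ms i))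
    (f : (Fin n → X) → ℝ) (C : ℝ) (hC : ∀ t, |f t| ≤ C) : |mint n ms f| ≤ C := by
  induction n with
  | zero => exact hC _
  | succ n ih =>
    rw [mint_succ]
    refine (hms 0).2 _ _ (fun x => ?_)
    exact ih _ (fun i => hms i.succ) _ (fun t => hC _)

lemma mint_const {X : Type*} (n : ℕ) (ms : Fin n → ((X → ℝ) →ₗ[ℝ] ℝ)) (hms : ∀ i, IsMean (ms i))
    (c : ℝ) : mint n ms (fun _ => c) = c := by
  induction n with
  | zero => rfl
  | succ n ih =>
    rw [mint_succ]
    have := ih _ (fun i => hms i.succ)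
    rw [show Fin.tail ms = fun i => ms i.succ from rfl]
    rw [this]
    exact (hms 0).const c

lemma mint_face {X : Type*} (n : ℕ) (ms : Fin (n + 1) → ((X → ℝ) →ₗ[ℝ] ℝ)) (hms : ∀ i, IsMean (ms i))
    (f : (Fin n → X) → ℝ) (i : Fin (n + 1)) :
    mint (n + 1) ms (fun t => f (t ∘ i.succAbove)) = mint n (ms ∘ i.succAbove) f := by
  induction n with
  | zero =>
    have hi : i = 0 := Fin.ext (by omega)
    subst hi
    rw [mint_succ]
    simp only [cons_succAbove_zero]
    rw [(hms 0).const]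
    rfl
  | succ n ih =>
    refine Fin.cases ?_ (fun j => ?_) i
    · rw [mint_succ]
      simp only [cons_succAbove_zero]
      rw [(hms 0).const]
      rfl
    · rw [mint_succ]
      simp only [cons_succAbove_succ]
      rw [mint_succ]
      have h0 : (ms ∘ j.succ.succAbove) 0 = ms 0 := by simp
      rw [h0]
      congr 1
      funext x
      have := ih (Fin.tail ms) (fun i => hms i.succ) (fun t => f (Fin.cons x t)) j
      rw [this]
      congr 1
      congr 1
      funext k
      simp [Fin.tail]

/-- The operator associated with a family of means. -/
def mOp {S X : Type*} (M : S → ((X → ℝ) →ₗ[ℝ] ℝ)) (n : ℕ) :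
    ((Fin (n + 1) → X) → ℝ) →ₗ[ℝ] ((Fin (n + 1) → S) → ℝ) :=
  LinearMap.pi (fun s => mint (n + 1) (M ∘ s))

lemma mOp_apply {S X : Type*} (M : S → ((X → ℝ) →ₗ[ℝ] ℝ)) (n : ℕ) (f) (s) :
    mOp M n f s = mint (n + 1) (M ∘ s) f := rfl

lemma mint_equiv {Λ S X : Type*} [Group Λ] [MulAction Λ S] [MulAction Λ X]
    (M : S → ((X → ℝ) →ₗ[ℝ] ℝ)) (hM : ∀ s, IsMean (M s))
    (he : ∀ (γ : Λ) s, ∀ f ∈ bd X, M (γ • s) f = M s (fun x => f (γ • x)))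
    (n : ℕ) (f : (Fin n → X) → ℝ) (hf : f ∈ bd (Fin n → X)) (γ : Λ) (s : Fin n → S) :
    mint n (M ∘ (fun i => γ • s i)) f = mint n (M ∘ s) (fun t => f (fun i => γ • t i)) := by
  induction n with
  | zero =>
    show f _ = f _
    congr 1
    funext i
    exact i.elim0
  | succ n ih =>
    obtain ⟨C, hC⟩ := hf
    rw [mint_succ, mint_succ]
    have hb : (fun x => mint n (Fin.tail (M ∘ fun i => γ • s i)) (fun t => f (Fin.cons x t))) ∈ bd X :=
      ⟨C, fun x => mint_bound n _ (fun i => hM _) _ C (fun t => hC _)⟩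
    show M (γ • s 0) _ = M (s 0) _
    rw [he _ _ _ hb]
    congr 1
    funext x
    have := ih (fun t => f (Fin.cons (γ • x) t)) ⟨C, fun t => hC _⟩ (s ∘ Fin.succ)
    refine Eq.trans this ?_
    show mint n (Fin.tail (M ∘ s)) _ = _
    congr 1
    funext t
    congr 1
    funext i
    refine Fin.cases ?_ (fun i => ?_) i <;> simp

lemma mOp_isOp {Λ S X : Type*} [Group Λ] [MulAction Λ S] [MulAction Λ X]
    (M : S → ((X → ℝ) →ₗ[ℝ] ℝ)) (hM : ∀ s, IsMean (M s))
    (he : ∀ (γ : Λ) s, ∀ f ∈ bd X, M (γ • s) f = M s (fun x => f (γ • x))) :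
    IsOp Λ (fun n => mOp M n) where
  comm n f := by
    funext s
    rw [mOp_apply, gcob_apply]
    have : gcob X n f = ∑ i : Fin (n + 2), ((-1 : ℝ) ^ (i : ℕ)) • (fun t => f (t ∘ i.succAbove)) := by
      funext t
      simp [gcob_apply]
    rw [this, map_sum]
    refine Finset.sum_congr rfl fun i _ => ?_
    rw [map_smul, mint_face _ (M ∘ s) (fun i => hM (s i))]
    rfl
  const c := by
    funext s
    exact mint_const _ (M ∘ s) (fun i => hM (s i)) c
  bound n f C hC g := mint_bound _ (M ∘ g) (fun i => hM (g i)) f C hC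
  equiv n f hf γ g := mint_equiv M hM he _ f hf γ g

/-- Alternation. -/
def altOp (S : Type*) (n : ℕ) : ((Fin (n + 1) → S) → ℝ) →ₗ[ℝ] ((Fin (n + 1) → S) → ℝ) where
  toFun f := fun g => (1 / ((n + 1).factorial : ℝ)) *
    ∑ π : Equiv.Perm (Fin (n + 1)), ((Equiv.Perm.sign π : ℤ) : ℝ) * f (g ∘ π)
  map_add' f g := by
    funext τ
    simp [mul_add, Finset.sum_add_distrib]
  map_smul' r f := by
    funext τ
    simp only [Pi.smul_apply, smul_eq_mul, RingHom.id_apply, Finset.mul_sum]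
    exact Finset.sum_congr rfl fun i _ => by ring

lemma altOp_apply {S : Type*} (n : ℕ) (f : (Fin (n + 1) → S) → ℝ) (g) :
  altOp S n f g = (1 / ((n + 1).factorial : ℝ)) *
    ∑ π : Equiv.Perm (Fin (n + 1)), ((Equiv.Perm.sign π : ℤ) : ℝ) * f (g ∘ π) := rfl

lemma altOp_perm {S : Type*} (n : ℕ) (f : (Fin (n + 1) → S) → ℝ) (g) (τ : Equiv.Perm (Fin (n + 1))) :
    altOp S n f (g ∘ τ) = ((Equiv.Perm.sign τ : ℤ) : ℝ) * altOp S n f g := by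
  rw [altOp_apply, altOp_apply, mul_left_comm]
  congr 1
  rw [Finset.mul_sum]
  rw [← Equiv.sum_comp (Equiv.mulLeft τ) (fun π => ((Equiv.Perm.sign τ : ℤ) : ℝ) * (((Equiv.Perm.sign π : ℤ) : ℝ) * f (g ∘ π)))]
  refine Finset.sum_congr rfl fun π _ => ?_
  have h1 : ((Equiv.Perm.sign τ : ℤ) : ℝ) * ((Equiv.Perm.sign τ : ℤ) : ℝ) = 1 := by
    norm_cast
    simp
  simp only [Equiv.coe_mulLeft, Equiv.Perm.sign_mul, Units.val_mul, Int.cast_mul]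
  rw [← mul_assoc, ← mul_assoc, h1, one_mul]
  rfl

lemma altOp_vanish {S : Type*} (n : ℕ) (f : (Fin (n + 1) → S) → ℝ) (g) (hg : ¬ Function.Injective g) :
    altOp S n f g = 0 := by
  rw [Function.Injective] at hg
  push Not at hg
  obtain ⟨a, b, hab, hne⟩ := hg
  have h1 := altOp_perm n f g (Equiv.swap a b)
  have h2 : g ∘ Equiv.swap a b = g := by
    funext i
    simp only [Function.comp_apply, Equiv.swap_apply_def]
    split_ifs with h h'
    · rw [h, hab]
    · rw [h', hab]
    · rfl
  rw [h2, Equiv.Perm.sign_swap hne] at h1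
  simp at h1
  linarith

lemma altOp_comm (S : Type*) (n : ℕ) (f : (Fin (n + 1) → S) → ℝ) :
    gcob S n (altOp S n f) = altOp S (n + 1) (gcob S n f) := by
  funext g
  rw [gcob_apply, altOp_apply]
  simp only [altOp_apply, gcob_apply, Finset.mul_sum]
  have h1 : ∀ j : Fin (n + 2), ∑ σ : Equiv.Perm (Fin (n + 2)),
      ((Equiv.Perm.sign σ : ℤ) : ℝ) * ((-1 : ℝ) ^ (j : ℕ) * f ((g ∘ σ) ∘ j.succAbove))
      = ∑ σ : Equiv.Perm (Fin (n + 2)), ((Equiv.Perm.sign σ : ℤ) : ℝ) * f (g ∘ σ ∘ Fin.succ) := by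
    intro j
    rw [← Equiv.sum_comp (Equiv.mulRight (Fin.cycleRange j))]
    refine Finset.sum_congr rfl fun σ _ => ?_
    have e : (g ∘ (Equiv.mulRight (Fin.cycleRange j) σ)) ∘ j.succAbove = g ∘ σ ∘ Fin.succ := by
      funext x
      simp [Fin.cycleRange_succAbove]
    rw [e]
    have e2 : ((-1 : ℝ) ^ (j : ℕ)) * ((-1 : ℝ) ^ (j : ℕ)) = 1 := by
      rw [← mul_pow]; simp
    simp only [Equiv.coe_mulRight, Equiv.Perm.sign_mul, Fin.sign_cycleRange, Units.val_mul, Int.cast_mul]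
    push_cast
    linear_combination (((Equiv.Perm.sign σ : ℤ) : ℝ) * f (g ∘ σ ∘ Fin.succ)) * e2
  have h2 : ∑ σ : Equiv.Perm (Fin (n + 2)), ((Equiv.Perm.sign σ : ℤ) : ℝ) * f (g ∘ σ ∘ Fin.succ)
      = ∑ i : Fin (n + 2), ∑ π : Equiv.Perm (Fin (n + 1)),
        ((-1 : ℝ) ^ (i : ℕ)) * (((Equiv.Perm.sign π : ℤ) : ℝ) * f ((g ∘ i.succAbove) ∘ π)) := by
    rw [← Fintype.sum_prod_type']
    symm
    let F : Fin (n + 2) × Equiv.Perm (Fin (n + 1)) → Equiv.Perm (Fin (n + 2)) := fun p =>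
      (Fin.cycleRange p.1)⁻¹ * Equiv.Perm.decomposeFin.symm (0, p.2)
    have hF0 : ∀ p, F p 0 = p.1 := by
      intro p
      show (Fin.cycleRange p.1).symm (Equiv.Perm.decomposeFin.symm (0, p.2) 0) = _
      simp
    have hFs : ∀ p x, F p (Fin.succ x) = p.1.succAbove (p.2 x) := by
      intro p x
      show (Fin.cycleRange p.1).symm (Equiv.Perm.decomposeFin.symm (0, p.2) x.succ) = _
      simp
    have hF : Function.Bijective F := by
      rw [Fintype.bijective_iff_injective_and_card]
      constructor
      · rintro ⟨i, π⟩ ⟨j, τ⟩ h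
        have h0 : i = j := by
          have := hF0 (i, π)
          rw [h, hF0] at this
          exact this.symm
        subst h0
        congr 1
        ext x
        have := hFs (i, π) x
        rw [h, hFs] at this
        exact congrArg Fin.val (Fin.succAbove_right_injective this).symm
      · simp [Fintype.card_perm, Nat.factorial_succ]
    refine Fintype.sum_bijective F hF _ _ (fun p => ?_)
    have e : g ∘ F p ∘ Fin.succ = (g ∘ p.1.succAbove) ∘ p.2 := by
      funext x
      simp [hFs]
    rw [e]
    have e3 : ((Equiv.Perm.sign (F p) : ℤ) : ℝ) = ((-1 : ℝ) ^ (p.1 : ℕ)) * ((Equiv.Perm.sign p.2 : ℤ) : ℝ) := by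
      simp only [F, Equiv.Perm.sign_mul, Equiv.Perm.sign_inv, Fin.sign_cycleRange,
        Equiv.Perm.decomposeFin.symm_sign]
      push_cast
      simp
    rw [e3]
    ring
  have h3 : ∑ σ : Equiv.Perm (Fin (n + 2)), ∑ j : Fin (n + 2), 1 / ((n + 1 + 1).factorial : ℝ) *
      (((Equiv.Perm.sign σ : ℤ) : ℝ) * ((-1 : ℝ) ^ (j : ℕ) * f ((g ∘ σ) ∘ j.succAbove)))
      = 1 / ((n + 1).factorial : ℝ) *
        ∑ σ : Equiv.Perm (Fin (n + 2)), ((Equiv.Perm.sign σ : ℤ) : ℝ) * f (g ∘ σ ∘ Fin.succ) := by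
    rw [Finset.sum_comm]
    simp only [← Finset.mul_sum, h1]
    rw [Finset.sum_const, Nat.factorial_succ (n + 1)]
    simp only [Finset.card_univ, Fintype.card_fin, nsmul_eq_mul]
    push_cast
    have : ((n + 1).factorial : ℝ) ≠ 0 := by positivity
    have : (n : ℝ) + 1 + 1 ≠ 0 := by positivity
    field_simp
    ring
  rw [h3, h2, Finset.mul_sum]
  refine Finset.sum_congr rfl fun i _ => ?_
  rw [Finset.mul_sum]
  refine Finset.sum_congr rfl fun π _ => ?_
  ring

lemma altOp_isOp (Λ S : Type*) [Group Λ] [MulAction Λ S] : IsOp Λ (fun n => altOp S n) where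
  comm n f := altOp_comm S n f
  const c := by
    funext g
    rw [altOp_apply]
    simp
  bound n f C hC g := by
    rw [altOp_apply, abs_mul, abs_of_nonneg (by positivity), one_div,
      inv_mul_le_iff₀ (by positivity)]
    refine (Finset.abs_sum_le_sum_abs _ _).trans ?_
    refine (Finset.sum_le_sum (g := fun _ => C) (fun π _ => ?_)).trans ?_
    · rw [abs_mul]
      have : |((Equiv.Perm.sign π : ℤ) : ℝ)| = 1 := by
        rcases Int.units_eq_one_or (Equiv.Perm.sign π) with h | h <;> simp [h]
      rw [this, one_mul]
      exact hC _
    · simp [Fintype.card_perm]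
  equiv n f hf γ g := rfl

lemma ext_exists (Λ S : Type*) [Group Λ] [Countable Λ] [MulAction Λ S]
    (M : S → ((Λ → ℝ) →ₗ[ℝ] ℝ)) (hM : ∀ s, IsMean (M s))
    (he : ∀ (γ : Λ) s, ∀ f ∈ bd Λ, M (γ • s) f = M s (fun x => f (γ • x))) :
    ∃ A : ∀ n, ((Fin (n + 1) → Λ) → ℝ) →ₗ[ℝ] ((Fin (n + 1) → S) → ℝ), IsOp Λ A ∧
      (∀ n f g, ¬ Function.Injective g → A n f g = 0) ∧
      (∀ u ∈ grpC Λ 1, A 1 u = 0) := by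
  obtain ⟨μ, hμ⟩ := exists_wt Λ
  obtain ⟨m, hm, hs⟩ := exists_stat hμ
  let N : Λ → ((Λ → ℝ) →ₗ[ℝ] ℝ) := fun γ =>
    { toFun := fun f => m (fun x => f (γ * x))
      map_add' := fun f g => m.map_add (fun x => f (γ * x)) (fun x => g (γ * x))
      map_smul' := fun c f => m.map_smul c (fun x => f (γ * x)) }
  have hN : ∀ γ, IsMean (N γ) := fun γ => ⟨hm.1, fun f C hC => hm.2 _ C (fun x => hC _)⟩
  have hNe : ∀ (γ s : Λ), ∀ f ∈ bd Λ, N (γ • s) f = N s (fun x => f (γ • x)) := by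
    intro γ s f _
    show m _ = m _
    simp [mul_assoc]
  have o1 := mOp_isOp (Λ := Λ) N hN hNe
  have o2 := mOp_isOp (Λ := Λ) M hM he
  have o3 := altOp_isOp Λ S
  refine ⟨_, (o1.comp o2).comp o3, fun n f g hg => altOp_vanish n _ g hg, fun u hu => ?_⟩
  obtain ⟨⟨C, hC⟩, hinv⟩ := hu
  have hconst : ∃ c : ℝ, mOp N 1 u = fun _ => c := by
    set q : Λ → ℝ := fun x => u ![1, x] with hq
    refine ⟨m (fun x => m (fun y => q (x⁻¹ * y))), ?_⟩
    funext g
    rw [← stat_const hμ hm hs (q := q) ⟨C, fun x => hC _⟩ ((g 0)⁻¹ * g 1)]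
    show m (fun x => m (fun y => u _)) = _
    congr 1
    funext x
    congr 1
    funext y
    show _ = u ![1, x⁻¹ * ((g 0)⁻¹ * g 1) * y]
    rw [← hinv (g 0 * x) ![1, x⁻¹ * ((g 0)⁻¹ * g 1) * y]]
    congr 1
    funext i
    fin_cases i
    · simp
    · simp [mul_assoc]
  obtain ⟨c, hc⟩ := hconst
  have h2 : mOp M 1 (mOp N 1 u) = fun _ => c := by
    rw [hc]
    funext s
    exact mint_const _ (M ∘ s) (fun i => hM (s i)) c
  show altOp S 1 (mOp M 1 (mOp N 1 u)) = 0
  rw [h2]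
  funext g
  have : altOp S 1 (fun _ => c) g = altOp S 1 (fun _ => c) (fun _ => g 0) := rfl
  rw [this]
  exact altOp_vanish _ _ _ (fun h => by simpa using h (a₁ := 0) (a₂ := 1) rfl)

lemma means_exist (Λ K : Type*) [Group Λ] (H : K → Subgroup Λ)
    (hH : ∀ k, ∃ m : (Λ → ℝ) →ₗ[ℝ] ℝ, IsMean m ∧ ∀ h ∈ H k, ∀ f ∈ bd Λ, m (fun x => f (h * x)) = m f) :
    ∃ M : (Σ k, Λ ⧸ H k) → ((Λ → ℝ) →ₗ[ℝ] ℝ), (∀ s, IsMean (M s)) ∧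
      (∀ (γ : Λ) s, ∀ f ∈ bd Λ, M (γ • s) f = M s (fun x => f (γ • x))) := by
  choose m hm hinv using hH
  refine ⟨fun s =>
    { toFun := fun f => m s.1 (fun x => f (s.2.out * x))
      map_add' := fun f g => (m s.1).map_add (fun x => f (s.2.out * x)) (fun x => g (s.2.out * x))
      map_smul' := fun c f => (m s.1).map_smul c (fun x => f (s.2.out * x)) },
    fun s => ⟨(hm s.1).1, fun f C hC => (hm s.1).2 _ C (fun x => hC _)⟩, ?_⟩
  rintro γ ⟨k, q⟩ f ⟨C, hC⟩
  show m k (fun x => f ((γ • q).out * x)) = m k (fun x => f (γ • (q.out * x)))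
  have h1 : (γ * q.out)⁻¹ * (γ • q).out ∈ H k := by
    rw [← QuotientGroup.eq, QuotientGroup.out_eq']
    conv_rhs => rw [← QuotientGroup.out_eq' q]
    rfl
  have := hinv k _ h1 (fun x => f (γ * q.out * x)) ⟨C, fun x => hC _⟩
  simp only [mul_assoc, mul_inv_cancel_left, smul_eq_mul, mul_inv_rev] at this ⊢
  exact this
end P3b

section P4
lemma piece_exists {Q X : Type*} [Group Q] [Countable X] (a : Q →* Equiv.Perm X) (B : Set X)
    (hB : ∀ q x, x ∈ B → a q x ∈ B) (hfree : ∀ q x, a q x = x → q = 1)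
    (s : ℕ → X) (hsB : ∀ i, s i ∈ B) (hs : ∀ q i j, a q (s i) = s j → i = j) :
    ∃ f : Q × ℕ → X, Function.Injective f ∧ Set.range f = B ∧
      ∀ q r n, f (q * r, n) = a q (f (r, n)) := by
  classical
  let st : Setoid B :=
    { r := fun x y => ∃ q, a q x.1 = y.1
      iseqv := ⟨fun x => ⟨1, by simp⟩, fun {x y} ⟨q, hq⟩ => ⟨q⁻¹, by rw [← hq]; simp⟩,
        fun {x y z} ⟨q, hq⟩ ⟨r, hr⟩ => ⟨r * q, by rw [map_mul, Equiv.Perm.mul_apply, hq, hr]⟩⟩ }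
  have hinf : Infinite (Quotient st) := by
    refine Infinite.of_injective (fun i : ℕ => Quotient.mk st ⟨s i, hsB i⟩) ?_
    intro i j hij
    obtain ⟨q, hq⟩ := Quotient.exact hij
    exact hs q i j hq
  have hcount : Countable (Quotient st) := inferInstance
  obtain ⟨⟨eqv⟩⟩ : Nonempty (Nonempty (ℕ ≃ Quotient st)) := by
    obtain ⟨d⟩ := nonempty_denumerable (Quotient st)
    exact ⟨⟨(Denumerable.eqv _).symm⟩⟩
  refine ⟨fun p => a p.1 (eqv p.2).out.1, ?_, ?_, ?_⟩
  · rintro ⟨q, n⟩ ⟨r, k⟩ h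
    dsimp only at h
    have h1 : a (r⁻¹ * q) (eqv n).out.1 = (eqv k).out.1 := by
      rw [map_mul, Equiv.Perm.mul_apply, h, ← Equiv.Perm.mul_apply, ← map_mul]
      simp
    have h2 : eqv n = eqv k := by
      rw [← Quotient.out_eq (eqv n), ← Quotient.out_eq (eqv k)]
      exact Quotient.sound ⟨_, h1⟩
    have h3 : n = k := eqv.injective h2
    subst h3
    have h4 := hfree _ _ h1
    rw [inv_mul_eq_one] at h4
    rw [h4]
  · ext x
    constructor
    · rintro ⟨⟨q, n⟩, rfl⟩
      exact hB _ _ (eqv n).out.2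
    · intro hx
      obtain ⟨n, hn⟩ := eqv.surjective (Quotient.mk st ⟨x, hx⟩)
      have : st.r (eqv n).out ⟨x, hx⟩ := Quotient.exact (by rw [Quotient.out_eq, hn])
      obtain ⟨q, hq⟩ := this
      exact ⟨(q, n), hq⟩
  · intro q r n
    simp

lemma flip_exists {Q X : Type*} [Group Q] [Countable X] (a a' : Q →* Equiv.Perm X) (B B' : Set X)
    (hB : ∀ q x, a q x ∈ B ↔ x ∈ B) (hfree : ∀ q x, a q x = x → q = 1)
    (hB' : ∀ q x, a' q x ∈ B' ↔ x ∈ B') (hfree' : ∀ q x, a' q x = x → q = 1)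
    (h1 : ∃ s : ℕ → X, (∀ i, s i ∈ B) ∧ ∀ q i j, a q (s i) = s j → i = j)
    (h2 : ∃ s : ℕ → X, (∀ i, s i ∉ B) ∧ ∀ q i j, a q (s i) = s j → i = j)
    (h1' : ∃ s : ℕ → X, (∀ i, s i ∈ B') ∧ ∀ q i j, a' q (s i) = s j → i = j)
    (h2' : ∃ s : ℕ → X, (∀ i, s i ∉ B') ∧ ∀ q i j, a' q (s i) = s j → i = j) :
    ∃ ε : Equiv.Perm X, (∀ q, ε * a q * ε⁻¹ = a' q) ∧ ∀ x, ε x ∈ B' ↔ x ∉ B := by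
  obtain ⟨s1, hs1, hs1'⟩ := h1
  obtain ⟨s2, hs2, hs2'⟩ := h2
  obtain ⟨s3, hs3, hs3'⟩ := h1'
  obtain ⟨s4, hs4, hs4'⟩ := h2'
  obtain ⟨f1, i1, r1, e1⟩ := piece_exists a B (fun q x h => (hB q x).2 h) hfree s1 hs1 hs1'
  obtain ⟨f2, i2, r2, e2⟩ := piece_exists a Bᶜ (fun q x h h' => h ((hB q x).1 h')) hfree s2 hs2 hs2'
  obtain ⟨f3, i3, r3, e3⟩ := piece_exists a' B' (fun q x h => (hB' q x).2 h) hfree' s3 hs3 hs3'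
  obtain ⟨f4, i4, r4, e4⟩ := piece_exists a' B'ᶜ (fun q x h h' => h ((hB' q x).1 h')) hfree' s4 hs4 hs4'
  have m1 : ∀ z, f1 z ∈ B := fun z => r1 ▸ ⟨z, rfl⟩
  have m2 : ∀ z, f2 z ∉ B := fun z => by
    have : f2 z ∈ Bᶜ := r2 ▸ ⟨z, rfl⟩
    exact this
  have m3 : ∀ z, f3 z ∈ B' := fun z => r3 ▸ ⟨z, rfl⟩
  have m4 : ∀ z, f4 z ∉ B' := fun z => by
    have : f4 z ∈ B'ᶜ := r4 ▸ ⟨z, rfl⟩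
    exact this
  have b1 : Function.Bijective (Sum.elim f1 f2) := by
    refine ⟨i1.sumElim i2 (fun x y h => m2 y (h ▸ m1 x)), fun x => ?_⟩
    by_cases hx : x ∈ B
    · rw [← r1] at hx
      obtain ⟨z, hz⟩ := hx
      exact ⟨Sum.inl z, hz⟩
    · have hx : x ∈ Bᶜ := hx
      rw [← r2] at hx
      obtain ⟨z, hz⟩ := hx
      exact ⟨Sum.inr z, hz⟩
  have b2 : Function.Bijective (Sum.elim f4 f3) := by
    refine ⟨i4.sumElim i3 (fun x y h => m4 x (h ▸ m3 y)), fun x => ?_⟩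
    by_cases hx : x ∈ B'
    · rw [← r3] at hx
      obtain ⟨z, hz⟩ := hx
      exact ⟨Sum.inr z, hz⟩
    · have hx : x ∈ B'ᶜ := hx
      rw [← r4] at hx
      obtain ⟨z, hz⟩ := hx
      exact ⟨Sum.inl z, hz⟩
  let ε : Equiv.Perm X := (Equiv.ofBijective _ b1).symm.trans (Equiv.ofBijective _ b2)
  have hε : ∀ z, ε (Sum.elim f1 f2 z) = Sum.elim f4 f3 z := by
    intro z
    show Equiv.ofBijective _ b2 ((Equiv.ofBijective _ b1).symm (Equiv.ofBijective _ b1 z)) = _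
    rw [Equiv.symm_apply_apply]
    rfl
  refine ⟨ε, fun q => ?_, fun x => ?_⟩
  · rw [mul_inv_eq_iff_eq_mul]
    ext x
    obtain ⟨z, rfl⟩ := b1.2 x
    rw [Equiv.Perm.mul_apply, Equiv.Perm.mul_apply, hε]
    rcases z with ⟨r, n⟩ | ⟨r, n⟩
    · have := hε (Sum.inl (q * r, n))
      simp only [Sum.elim_inl] at this ⊢
      rw [← e1, this, e4]
    · have := hε (Sum.inr (q * r, n))
      simp only [Sum.elim_inr] at this ⊢
      rw [← e2, this, e3]
  · obtain ⟨z, rfl⟩ := b1.2 x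
    rw [hε]
    rcases z with z | z
    · simp [m1, m4]
    · simp [m2, m3]

lemma vertex_data (Λ K : Type*) [Group Λ] [Countable Λ] [Countable K] [Nonempty K] (H : K → Subgroup Λ) :
    ∃ (a : Λ →* Equiv.Perm ℕ) (p : ℕ → Σ k, Λ ⧸ H k) (s : K → ℕ → ℕ),
      (∀ γ y, a γ y = y → γ = 1) ∧ (∀ γ y, p (a γ y) = γ • p y) ∧
      (∀ k n, p (s k n) = ⟨k, ((1 : Λ) : Λ ⧸ H k)⟩) ∧
      ∀ γ k i j, a γ (s k i) = s k j → i = j := by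
  have : Infinite (Λ × (K × ℕ)) := by
    refine Infinite.of_injective (fun n : ℕ => ((1 : Λ), (Classical.arbitrary K, n))) ?_
    intro i j h
    simpa using h
  obtain ⟨d⟩ := nonempty_denumerable (Λ × (K × ℕ))
  let θ : Λ × (K × ℕ) ≃ ℕ := Denumerable.eqv _
  let pp : Λ × (K × ℕ) → Σ k, Λ ⧸ H k := fun x => ⟨x.2.1, (x.1 : Λ ⧸ H _)⟩
  let tr : Λ →* Equiv.Perm (Λ × (K × ℕ)) :=
    { toFun := fun γ => Equiv.prodCongr (Equiv.mulLeft γ) (Equiv.refl _)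
      map_one' := by ext <;> simp
      map_mul' := fun γ δ => by ext <;> simp [mul_assoc] }
  have htr : ∀ γ x, tr γ x = (γ * x.1, x.2) := fun γ x => rfl
  refine ⟨(θ.permCongrHom : _ →* _).comp tr, fun y => pp (θ.symm y),
    fun k n => θ (1, (k, n)), ?_, ?_, ?_, ?_⟩
  · intro γ y h
    have h1 : θ (tr γ (θ.symm y)) = y := h
    have h2 : tr γ (θ.symm y) = θ.symm y := θ.injective (by rw [h1]; simp)
    rw [htr] at h2
    have := congrArg Prod.fst h2
    simpa using this
  · intro γ y
    have h1 : θ.symm (((θ.permCongrHom : Equiv.Perm _ →* Equiv.Perm ℕ).comp tr) γ y) = tr γ (θ.symm y) := by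
      show θ.symm (θ (tr γ (θ.symm y))) = _
      simp
    dsimp only
    rw [h1, htr]
    rfl
  · intro k n
    dsimp only
    rw [Equiv.symm_apply_apply]
  · intro γ k i j h
    have h1 : θ (tr γ (θ.symm (θ (1, (k, i))))) = θ (1, (k, j)) := h
    have h2 := θ.injective h1
    rw [htr] at h2
    simpa using congrArg (fun z => z.2.2) h2

/-! ### trees -/

lemma isWalk_append (G : SerreGraph) (p q : List G.E) (v w : G.V) :
    G.IsWalk (p ++ q) v w ↔ ∃ u, G.IsWalk p v u ∧ G.IsWalk q u w := by
  induction p generalizing v with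
  | nil => simp [SerreGraph.IsWalk]
  | cons e p ih =>
    simp only [List.cons_append, SerreGraph.IsWalk, ih]
    constructor
    · rintro ⟨h, u, h1, h2⟩
      exact ⟨u, ⟨h, h1⟩, h2⟩
    · rintro ⟨u, ⟨h, h1⟩, h2⟩
      exact ⟨h, u, h1, h2⟩

lemma isWalk_rev (G : SerreGraph) (p : List G.E) (v w : G.V) (h : G.IsWalk p v w) :
    G.IsWalk (p.map G.bar).reverse w v := by
  induction p generalizing v with
  | nil => exact h.symm
  | cons e p ih =>
    rw [List.map_cons, List.reverse_cons, isWalk_append]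
    refine ⟨G.t e, ih _ h.2, ?_, ?_⟩
    · simp [SerreGraph.o, G.bar_bar]
    · exact h.1

lemma exists_backtrack {α : Type*} (R : α → α → Prop) (l : List α) (h : ¬ l.IsChain R) :
    ∃ l1 a b l2, l = l1 ++ a :: b :: l2 ∧ ¬ R a b := by
  induction l with
  | nil => simp at h
  | cons x l ih =>
    cases l with
    | nil => simp at h
    | cons y l =>
      by_cases hxy : R x y
      · have : ¬ (y :: l).IsChain R := by
          intro h'
          exact h (List.isChain_cons_cons.2 ⟨hxy, h'⟩)
        obtain ⟨l1, a, b, l2, he, hn⟩ := ih this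
        exact ⟨x :: l1, a, b, l2, by rw [he]; rfl, hn⟩
      · exact ⟨[], x, y, l, rfl, hxy⟩

lemma loop_trivial (G : SerreGraph) (T : Set G.E) (hT : G.IsSpanningTree T) {P : Type*} [Group P]
    (ε : G.E → P) (hε : ∀ e, ε (G.bar e) = (ε e)⁻¹) (k : ℕ) (p : List G.E) (hk : p.length ≤ k) (v : G.V)
    (hp : ∀ e ∈ p, e ∈ T) (hw : G.IsWalk p v v) : (p.map ε).prod = 1 := by
  induction k generalizing p v with
  | zero =>
    have : p = [] := List.length_eq_zero_iff.1 (by omega)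
    simp [this]
  | succ k ih =>
    by_cases hne : p = []
    · simp [hne]
    obtain ⟨l1, a, b, l2, rfl, hn⟩ := exists_backtrack _ _ (hT.2.2 v p hne hp hw)
    push Not at hn
    subst hn
    rw [isWalk_append] at hw
    obtain ⟨u, hw1, hw2⟩ := hw
    have hu : G.IsWalk l2 u v := by
      have := hw2.2.2
      rw [← hw2.1]
      exact this
    have := ih (l1 ++ l2) (by simp at hk ⊢; omega) v
      (fun e he => hp e (by simp at he ⊢; tauto)) ((isWalk_append _ _ _ _ _).2 ⟨u, hw1, hu⟩)
    simp only [List.map_append, List.map_cons, List.prod_append, List.prod_cons, hε] at this ⊢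
    rw [← mul_assoc (ε a)]
    simpa using this

lemma prod_rev (G : SerreGraph) {P : Type*} [Group P]
    (ε : G.E → P) (hε : ∀ e, ε (G.bar e) = (ε e)⁻¹) (p : List G.E) :
    (((p.map G.bar).reverse).map ε).prod = ((p.map ε).prod)⁻¹ := by
  induction p with
  | nil => simp
  | cons e p ih => simp at ih ⊢; rw [ih, hε]

lemma tree_lemma (G : SerreGraph) (T : Set G.E) (hT : G.IsSpanningTree T) {P : Type*} [Group P]
    (ε : G.E → P) (hε : ∀ e, ε (G.bar e) = (ε e)⁻¹) :
    ∃ c : G.V → P, ∀ e ∈ T, c (G.t e) * ε e = c (G.o e) := by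
  by_cases hV : Nonempty G.V
  swap
  · exact ⟨fun _ => 1, fun e => (hV ⟨G.t e⟩).elim⟩
  obtain ⟨r⟩ := hV
  choose p hpT hpw using fun v => hT.2.1 r v
  let ε' : G.E → P := fun e => (ε e)⁻¹
  have hε' : ∀ e, ε' (G.bar e) = (ε' e)⁻¹ := fun e => by simp [ε', hε]
  refine ⟨fun v => ((p v).map ε').prod, fun e he => ?_⟩
  have h1 : G.IsWalk ((p (G.o e) ++ [e]) ++ ((p (G.t e)).map G.bar).reverse) r r := by
    rw [isWalk_append]
    refine ⟨G.t e, ?_, isWalk_rev _ _ _ _ (hpw _)⟩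
    rw [isWalk_append]
    exact ⟨G.o e, hpw _, rfl, rfl⟩
  have h2 := loop_trivial G T hT ε' hε' _ _ le_rfl r (by
    intro e' he'
    simp only [List.mem_append, List.mem_singleton, List.mem_reverse, List.mem_map] at he'
    rcases he' with (h | h) | ⟨a, h, rfl⟩
    · exact hpT _ _ h
    · rw [h]; exact he
    · exact hT.1 _ (hpT _ _ h)) h1
  rw [List.map_append, List.prod_append, prod_rev G ε' hε', List.map_append, List.prod_append,
    mul_inv_eq_one] at h2
  simp only [List.map_cons, List.map_nil, List.prod_cons, List.prod_nil, mul_one, ε'] at h2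
  rw [mul_inv_eq_iff_eq_mul] at h2
  exact h2.symm
end P4

section P4b
section BS
variable {G : SerreGraph} (𝒢 : GraphOfGroups G)

/-- Types of cosets at a vertex. -/
abbrev KK (G : SerreGraph) (v : G.V) : Type := Option {e : G.E // G.t e = v}

/-- The subgroups at a vertex. -/
def HH (v : G.V) : KK G v → Subgroup (𝒢.Gv v)
  | none => ⊥
  | some e => e.2 ▸ (𝒢.h e.1).range

/-- The vertex set with trivial or edge stabilizers. -/
abbrev SS (v : G.V) : Type := Σ k : KK G v, 𝒢.Gv v ⧸ HH 𝒢 v k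

/-- The base coset of an edge. -/
def sg (e : G.E) : SS 𝒢 (G.t e) := ⟨some ⟨e, rfl⟩, ((1 : 𝒢.Gv (G.t e)) : 𝒢.Gv (G.t e) ⧸ HH 𝒢 (G.t e) (some ⟨e, rfl⟩))⟩

/-- The free base point. -/
def sn (v : G.V) : SS 𝒢 v := ⟨none, ((1 : 𝒢.Gv v) : 𝒢.Gv v ⧸ HH 𝒢 v none)⟩

lemma smul_sg (e : G.E) (γ : 𝒢.Gv (G.t e)) : γ • sg 𝒢 e = sg 𝒢 e ↔ ∃ x, 𝒢.h e x = γ := by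
  have h1 : γ • sg 𝒢 e = ⟨some ⟨e, rfl⟩, ((γ * 1 : 𝒢.Gv (G.t e)) : 𝒢.Gv (G.t e) ⧸ HH 𝒢 (G.t e) (some ⟨e, rfl⟩))⟩ := rfl
  rw [h1, sg]
  rw [Sigma.mk.injEq]
  simp only [heq_eq_eq, true_and, mul_one]
  rw [eq_comm, QuotientGroup.eq, inv_one, one_mul]
  rfl

lemma smul_fst (v : G.V) (γ : 𝒢.Gv v) (s : SS 𝒢 v) : (γ • s).1 = s.1 := rfl

lemma exists_smul_sg (v : G.V) (s : SS 𝒢 v) (hs : s.1 ≠ none) :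
    ∃ (e : G.E) (h : G.t e = v) (γ : 𝒢.Gv (G.t e)), s = h ▸ (γ • sg 𝒢 e) := by
  obtain ⟨k, q⟩ := s
  cases k with
  | none => exact (hs rfl).elim
  | some k =>
    obtain ⟨e, rfl⟩ := k
    induction q using QuotientGroup.induction_on with
    | H γ =>
      refine ⟨e, rfl, γ, ?_⟩
      show _ = (⟨some ⟨e, rfl⟩, ((γ * 1 : 𝒢.Gv (G.t e)) : 𝒢.Gv (G.t e) ⧸ HH 𝒢 (G.t e) (some ⟨e, rfl⟩))⟩ : SS 𝒢 (G.t e))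
      rw [mul_one]

/-- Edge condition. -/
def EdgeOK (a : ∀ v, 𝒢.Gv v →* Equiv.Perm ℕ) (p : ∀ v, ℕ → SS 𝒢 v) (e : G.E) (ε : Equiv.Perm ℕ) : Prop :=
  (∀ x : 𝒢.Ge e, ε * a _ (𝒢.h (G.bar e) (𝒢.barEquiv e x)) * ε⁻¹ = a _ (𝒢.h e x)) ∧
  ∀ z, p _ (ε z) = sg 𝒢 e ↔ p _ z ≠ sg 𝒢 (G.bar e)

lemma EdgeOK.bar {a : ∀ v, 𝒢.Gv v →* Equiv.Perm ℕ} {p : ∀ v, ℕ → SS 𝒢 v} {e : G.E} {ε : Equiv.Perm ℕ}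
    (h : EdgeOK 𝒢 a p e ε) : EdgeOK 𝒢 a p (G.bar e) ε⁻¹ := by
  constructor
  · intro b
    obtain ⟨x, rfl⟩ := (𝒢.barEquiv e).surjective b
    let Φ : (Σ e, 𝒢.Ge e) → Equiv.Perm ℕ := fun y => a _ (𝒢.h y.1 y.2)
    have h1 : Φ ⟨G.bar (G.bar e), 𝒢.barEquiv (G.bar e) (𝒢.barEquiv e x)⟩ = Φ ⟨e, x⟩ := by
      congr 1
      exact Sigma.ext (G.bar_bar e) (𝒢.barEquiv_coh e x)
    have h2 : a _ (𝒢.h (G.bar (G.bar e)) (𝒢.barEquiv (G.bar e) (𝒢.barEquiv e x))) = a _ (𝒢.h e x) := h1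
    rw [h2, ← h.1 x]
    group
  · intro z
    have hb : ∀ e', e' = e → (p _ z = sg 𝒢 e' ↔ p _ z = sg 𝒢 e) := by
      rintro e' rfl; rfl
    rw [Ne, hb _ (G.bar_bar e)]
    have := h.2 (ε⁻¹ z)
    have h3 : ε (ε⁻¹ z) = z := by simp
    rw [h3] at this
    tauto

lemma edge_exists [Fintype G.E] (a : ∀ v, 𝒢.Gv v →* Equiv.Perm ℕ) (p : ∀ v, ℕ → SS 𝒢 v)
    (s : ∀ v, KK G v → ℕ → ℕ)
    (hfree : ∀ v γ y, a v γ y = y → γ = 1) (hp : ∀ v γ y, p v (a v γ y) = γ • p v y)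
    (hs : ∀ v k n, p v (s v k n) = ⟨k, ((1 : 𝒢.Gv v) : 𝒢.Gv v ⧸ HH 𝒢 v k)⟩)
    (hs' : ∀ v γ k i j, a v γ (s v k i) = s v k j → i = j) :
    ∃ ε : G.E → Equiv.Perm ℕ, (∀ e, ε (G.bar e) = (ε e)⁻¹) ∧ ∀ e, EdgeOK 𝒢 a p e (ε e) := by
  classical
  have hinv : ∀ e (x : 𝒢.Ge e) z, p _ (a _ (𝒢.h e x) z) = sg 𝒢 e ↔ p _ z = sg 𝒢 e := by
    intro e x z
    rw [hp]
    constructor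
    · intro h
      have h2 : 𝒢.h e x • sg 𝒢 e = sg 𝒢 e := (smul_sg 𝒢 e _).2 ⟨x, rfl⟩
      rw [← h2] at h
      exact smul_left_cancel _ h
    · intro h
      rw [h]
      exact (smul_sg 𝒢 e _).2 ⟨x, rfl⟩
  have hno : ∀ e n, p _ (s (G.t e) none n) ≠ sg 𝒢 e := by
    intro e n h
    rw [hs] at h
    have := congrArg Sigma.fst h
    simp [sg] at this
  have hex : ∀ e, ∃ ε, EdgeOK 𝒢 a p e ε := by
    intro e
    obtain ⟨ε, h1, h2⟩ := flip_exists (Q := 𝒢.Ge e)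
      ((a (G.t (G.bar e))).comp ((𝒢.h (G.bar e)).comp (𝒢.barEquiv e).toMonoidHom))
      ((a (G.t e)).comp (𝒢.h e))
      {z | p _ z = sg 𝒢 (G.bar e)} {z | p _ z = sg 𝒢 e}
      (fun q x => hinv (G.bar e) (𝒢.barEquiv e q) x)
      (fun q x h => by
        have h1 := hfree _ _ _ h
        have h2 : 𝒢.h (G.bar e) (𝒢.barEquiv e q) = 1 := h1
        have h3 := (injective_iff_map_eq_one (𝒢.h (G.bar e))).1 (𝒢.h_inj _) _ h2
        simpa using h3)
      (fun q x => hinv e q x)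
      (fun q x h => (injective_iff_map_eq_one (𝒢.h e)).1 (𝒢.h_inj _) _ (hfree _ _ _ h))
      ⟨s _ (some ⟨G.bar e, rfl⟩), fun i => hs _ _ _, fun q i j => hs' _ _ _ i j⟩
      ⟨s _ none, fun i => hno _ _, fun q i j => hs' _ _ _ i j⟩
      ⟨s _ (some ⟨e, rfl⟩), fun i => hs _ _ _, fun q i j => hs' _ _ _ i j⟩
      ⟨s _ none, fun i => hno _ _, fun q i j => hs' _ _ _ i j⟩
    exact ⟨ε, h1, h2⟩
  choose ε0 hε0 using hex
  letI : LinearOrder G.E := IsWellOrder.linearOrder WellOrderingRel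
  refine ⟨fun e => if e < G.bar e then ε0 e else (ε0 (G.bar e))⁻¹, fun e => ?_, fun e => ?_⟩
  · dsimp only
    rw [G.bar_bar]
    rcases lt_trichotomy e (G.bar e) with h | h | h
    · rw [if_neg (not_lt.2 h.le), if_pos h]
    · exact (G.bar_ne e h.symm).elim
    · rw [if_neg (not_lt.2 h.le), if_pos h, inv_inv]
  · dsimp only
    split_ifs with h
    · exact hε0 e
    · have := (hε0 (G.bar e)).bar
      rwa [G.bar_bar] at this

lemma edge_rel (T : Set G.E) (e : G.E) (x : 𝒢.Ge e) :
    𝒢.edgeElt T e * 𝒢.vtxIncl T _ (𝒢.h (G.bar e) (𝒢.barEquiv e x)) * (𝒢.edgeElt T e)⁻¹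
      = 𝒢.vtxIncl T _ (𝒢.h e x) := by
  have h1 := 𝒢.mk_rel_one (T := T) (Or.inr (Or.inr (Or.inl ⟨e, x, rfl⟩)))
  rw [map_mul, map_mul, map_mul, map_inv, map_inv] at h1
  exact mul_inv_eq_one.1 h1

lemma edge_bar (T : Set G.E) (e : G.E) : 𝒢.edgeElt T e * 𝒢.edgeElt T (G.bar e) = 1 := by
  have h1 := 𝒢.mk_rel_one (T := T) (Or.inr (Or.inl ⟨e, rfl⟩))
  rw [map_mul] at h1
  exact h1

lemma edge_tree (T : Set G.E) (e : G.E) (he : e ∈ T) : 𝒢.edgeElt T e = 1 :=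
  𝒢.mk_rel_one (T := T) (Or.inr (Or.inr (Or.inr ⟨e, he, rfl⟩)))

/-- Induction principle for the fundamental group. -/
lemma pi1_ind (T : Set G.E) (P : 𝒢.pi1 T → Prop) (h1 : P 1)
    (hv : ∀ v γ g, P g → P (𝒢.vtxIncl T v γ * g)) (he : ∀ e g, P g → P (𝒢.edgeElt T e * g)) (g) : P g := by
  let mkp : FreeGroup 𝒢.gens →* 𝒢.pi1 T := PresentedGroup.mk (𝒢.rels T)
  obtain ⟨w, hw⟩ : ∃ w, mkp w = g := PresentedGroup.mk_surjective (𝒢.rels T) g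
  subst hw
  have hmul : ∀ w : FreeGroup 𝒢.gens, ∀ g, P g → P (mkp w * g) := by
    intro w
    induction w using FreeGroup.induction_on with
    | C1 => intro g hg; rw [map_one, one_mul]; exact hg
    | of x =>
      rcases x with ⟨v, γ⟩ | e
      · exact fun g hg => hv v γ g hg
      · exact fun g hg => he e g hg
    | inv_of x _ =>
      rcases x with ⟨v, γ⟩ | e
      · intro g hg
        have := hv v γ⁻¹ g hg
        rw [map_inv] at this
        rw [map_inv]
        exact this
      · intro g hg
        have := he (G.bar e) g hg
        rw [← inv_eq_of_mul_eq_one_right (edge_bar 𝒢 T e)] at this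
        rw [map_inv]
        exact this
    | mul x y hx hy =>
      intro g hg
      rw [map_mul, mul_assoc]
      exact hx _ (hy _ hg)
  have := hmul w 1 h1
  rwa [mul_one] at this

lemma data_exists [Fintype G.E] (hcount : ∀ v : G.V, Countable (𝒢.Gv v)) (T : Set G.E) (hT : G.IsSpanningTree T) :
    ∃ (ρ : 𝒢.pi1 T →* Equiv.Perm ℕ) (p : ∀ v, ℕ → SS 𝒢 v) (y : G.V → ℕ),
      (∀ v γ z, p v (ρ (𝒢.vtxIncl T v γ) z) = γ • p v z) ∧ (∀ v, p v (y v) = sn 𝒢 v) ∧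
      ∀ e z, p _ (ρ (𝒢.edgeElt T e) z) = sg 𝒢 e ↔ p _ z ≠ sg 𝒢 (G.bar e) := by
  choose a p s hfree hp hs hs' using fun v =>
    vertex_data (𝒢.Gv v) (KK G v) (HH 𝒢 v)
  obtain ⟨ε, hbar, hε⟩ := edge_exists 𝒢 a p s hfree hp hs hs'
  obtain ⟨c, hc⟩ := tree_lemma G T hT ε hbar
  let f : 𝒢.gens → Equiv.Perm ℕ := Sum.elim (fun x => c x.1 * a x.1 x.2 * (c x.1)⁻¹)
    (fun e => c (G.t e) * ε e * (c (G.t (G.bar e)))⁻¹)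
  have hf : ∀ r ∈ 𝒢.rels T, FreeGroup.lift f r = 1 := by
    rintro r (⟨v, g, h', rfl⟩ | ⟨e, rfl⟩ | ⟨e, x, rfl⟩ | ⟨e, he, rfl⟩)
    · simp only [map_mul, map_inv, FreeGroup.lift_apply_of, f, Sum.elim_inl]
      group
    · simp only [map_mul, map_inv, FreeGroup.lift_apply_of, f, Sum.elim_inr, G.bar_bar, hbar]
      group
    · simp only [map_mul, map_inv, FreeGroup.lift_apply_of, f, Sum.elim_inr, Sum.elim_inl, ← (hε e).1 x]
      group
    · simp only [FreeGroup.lift_apply_of, f, Sum.elim_inr]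
      rw [hc e he]
      exact mul_inv_cancel _
  let ρ : 𝒢.pi1 T →* Equiv.Perm ℕ := PresentedGroup.toGroup hf
  have hρ1 : ∀ v γ, ρ (𝒢.vtxIncl T v γ) = c v * a v γ * (c v)⁻¹ := fun v γ =>
    PresentedGroup.toGroup.of hf (x := Sum.inl ⟨v, γ⟩)
  have hρ2 : ∀ e, ρ (𝒢.edgeElt T e) = c (G.t e) * ε e * (c (G.t (G.bar e)))⁻¹ := fun e =>
    PresentedGroup.toGroup.of hf (x := Sum.inr e)
  refine ⟨ρ, fun v z => p v ((c v)⁻¹ z), fun v => c v (s v none 0), ?_, ?_, ?_⟩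
  · intro v γ z
    rw [hρ1]
    simp [hp]
  · intro v
    simp [hs, sn]
  · intro e z
    rw [hρ2]
    have := (hε e).2 ((c (G.t (G.bar e)))⁻¹ z)
    simpa using this

end BS
end P4b

section P4c
section BS2
variable {G : SerreGraph} (𝒢 : GraphOfGroups G)

/-- Reduced forms. -/
inductive Rd (T : Set G.E) (v' : G.V) : (v : G.V) → SS 𝒢 v → 𝒢.pi1 T → Prop
  | nil (γ : 𝒢.Gv v') : Rd T v' v' (γ • sn 𝒢 v') (𝒢.vtxIncl T v' γ)
  | cons (e : G.E) (γ : 𝒢.Gv (G.t e)) (s : SS 𝒢 (G.t (G.bar e))) (g : 𝒢.pi1 T)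
      (h : Rd T v' (G.t (G.bar e)) s g) (hs : s ≠ sg 𝒢 (G.bar e)) :
      Rd T v' (G.t e) (γ • sg 𝒢 e) (𝒢.vtxIncl T _ γ * 𝒢.edgeElt T e * g)

variable {𝒢}

lemma Rd.mulv {T : Set G.E} {v' v : G.V} {s : SS 𝒢 v} {g : 𝒢.pi1 T} (h : Rd 𝒢 T v' v s g) (γ : 𝒢.Gv v) :
    Rd 𝒢 T v' v (γ • s) (𝒢.vtxIncl T v γ * g) := by
  cases h with
  | nil γ' =>
    rw [smul_smul, ← map_mul]
    exact Rd.nil _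
  | cons e γ' s g h hs =>
    rw [smul_smul, ← mul_assoc, ← mul_assoc, ← map_mul]
    exact Rd.cons _ _ _ _ h hs

lemma sg_cast_fst {e : G.E} {v : G.V} (h : G.t e = v) : (h ▸ sg 𝒢 e : SS 𝒢 v).1 = some ⟨e, h⟩ := by
  subst h; rfl

lemma sg_eq {e1 e2 : G.E} (hv : G.t e2 = G.t e1) (γ : 𝒢.Gv (G.t e1)) (h : γ • sg 𝒢 e1 = hv ▸ sg 𝒢 e2) :
    e1 = e2 := by
  have h1 := congrArg Sigma.fst h
  rw [sg_cast_fst] at h1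
  have h2 : (some ⟨e1, rfl⟩ : KK G (G.t e1)) = some ⟨e2, hv⟩ := h1
  simpa using h2

lemma Rd.mule' {T : Set G.E} {v' v : G.V} {s : SS 𝒢 v} {g : 𝒢.pi1 T} (h : Rd 𝒢 T v' v s g) (e : G.E)
    (hv : G.t (G.bar e) = v) (hs : s = hv ▸ sg 𝒢 (G.bar e)) :
    ∃ s', Rd 𝒢 T v' (G.t e) s' (𝒢.edgeElt T e * g) := by
  cases h with
  | nil γ =>
    have h1 := congrArg Sigma.fst hs
    rw [sg_cast_fst] at h1
    have h2 : (none : KK G v') = some ⟨G.bar e, hv⟩ := h1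
    simp at h2
  | cons e1 γ s1 g1 h1 hs1 =>
    have he := sg_eq hv γ hs
    subst he
    obtain ⟨x', rfl⟩ := (smul_sg 𝒢 _ γ).1 hs
    obtain ⟨x, rfl⟩ := (𝒢.barEquiv e).surjective x'
    have hb : ∀ e', e' = e → ∀ s, Rd 𝒢 T v' (G.t e') s g1 → ∃ s', Rd 𝒢 T v' (G.t e) s' g1 := by
      rintro e' rfl s h; exact ⟨s, h⟩
    obtain ⟨s', hs'⟩ := hb _ (G.bar_bar e) _ h1
    have := hs'.mulv (𝒢.h e x)
    rw [← edge_rel] at this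
    have h3 : (𝒢.edgeElt T e)⁻¹ = 𝒢.edgeElt T (G.bar e) := inv_eq_of_mul_eq_one_right (edge_bar 𝒢 T e)
    rw [h3] at this
    rw [← mul_assoc, ← mul_assoc]
    exact ⟨_, this⟩

lemma Rd.mule {T : Set G.E} {v' : G.V} (e : G.E) {s : SS 𝒢 (G.t (G.bar e))} {g : 𝒢.pi1 T}
    (h : Rd 𝒢 T v' _ s g) :
    ∃ s', Rd 𝒢 T v' (G.t e) s' (𝒢.edgeElt T e * g) := by
  by_cases hs : s = sg 𝒢 (G.bar e)
  · exact h.mule' e rfl hs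
  · have := Rd.cons e 1 s g h hs
    rw [map_one, one_mul] at this
    exact ⟨_, this⟩

lemma Rd.move {T : Set G.E} {v' : G.V} {g : 𝒢.pi1 T} (w : G.V) (l : List G.E) (hl : ∀ e ∈ l, e ∈ T) :
    ∀ (v : G.V) (s : SS 𝒢 v), Rd 𝒢 T v' v s g → G.IsWalk l v w → ∃ s', Rd 𝒢 T v' w s' g := by
  induction l with
  | nil =>
    intro v s h hw
    have : v = w := hw
    subst this
    exact ⟨s, h⟩
  | cons e l ih =>
    intro v s h hw
    obtain ⟨h1, h2⟩ := hw
    have h1' : G.t (G.bar e) = v := h1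
    subst h1'
    obtain ⟨s', hs'⟩ := h.mule e
    rw [edge_tree 𝒢 T e (hl e (by simp)), one_mul] at hs'
    exact ih (fun e he => hl e (by simp [he])) _ s' hs' h2

lemma Rd.exists {T : Set G.E} (hT : G.IsSpanningTree T) (v' : G.V) (g : 𝒢.pi1 T) :
    ∀ v, ∃ s, Rd 𝒢 T v' v s g := by
  refine pi1_ind 𝒢 T (fun g => ∀ v, ∃ s, Rd 𝒢 T v' v s g) ?_ ?_ ?_ g
  · intro v
    obtain ⟨l, hl, hw⟩ := hT.2.1 v' v
    have := Rd.nil (𝒢 := 𝒢) (T := T) (v' := v') 1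
    rw [map_one] at this
    exact this.move v l hl _ _ hw
  · intro w γ g ih v
    obtain ⟨s, hs⟩ := ih w
    obtain ⟨l, hl, hw⟩ := hT.2.1 w v
    exact (hs.mulv γ).move v l hl _ _ hw
  · intro e g ih v
    obtain ⟨s, hs⟩ := ih (G.t (G.bar e))
    obtain ⟨l, hl, hw⟩ := hT.2.1 (G.t e) v
    obtain ⟨s', hs'⟩ := hs.mule e
    exact hs'.move v l hl _ _ hw

lemma Rd.pp {T : Set G.E} (ρ : 𝒢.pi1 T →* Equiv.Perm ℕ) (p : ∀ v, ℕ → SS 𝒢 v)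
    (h1 : ∀ v γ z, p v (ρ (𝒢.vtxIncl T v γ) z) = γ • p v z)
    (h3 : ∀ e z, p _ (ρ (𝒢.edgeElt T e) z) = sg 𝒢 e ↔ p _ z ≠ sg 𝒢 (G.bar e))
    {v' v : G.V} {s : SS 𝒢 v} {g : 𝒢.pi1 T} (h : Rd 𝒢 T v' v s g) :
    (∃ (_ : v' = v) (γ : 𝒢.Gv v), g = 𝒢.vtxIncl T v γ) ∨
      (s.1 ≠ none ∧ ∃ σ' : SS 𝒢 v', σ'.1 ≠ none ∧ ∀ z, p v' z ≠ σ' → p v (ρ g z) = s) := by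
  induction h with
  | nil γ => exact Or.inl ⟨rfl, γ, rfl⟩
  | cons e γ s g h hs ih =>
    right
    refine ⟨by simp [smul_fst, sg], ?_⟩
    rcases ih with ⟨rfl, γ1, rfl⟩ | ⟨hn, σ', hσ', hz⟩
    · refine ⟨γ1⁻¹ • sg 𝒢 (G.bar e), by simp [sg], fun z hz => ?_⟩
      rw [map_mul, map_mul, Equiv.Perm.mul_apply, Equiv.Perm.mul_apply, h1]
      congr 1
      rw [h3, h1]
      intro h4
      apply hz
      rw [← h4, inv_smul_smul]
    · refine ⟨σ', hσ', fun z hzz => ?_⟩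
      rw [map_mul, map_mul, Equiv.Perm.mul_apply, Equiv.Perm.mul_apply, h1]
      congr 1
      rw [h3, hz z hzz]
      exact hs

variable (𝒢)

lemma pp_exists [Fintype G.E] (hcount : ∀ v : G.V, Countable (𝒢.Gv v)) (T : Set G.E) (hT : G.IsSpanningTree T) :
    ∃ (ρ : 𝒢.pi1 T →* Equiv.Perm ℕ) (p : ∀ v, ℕ → SS 𝒢 v) (y : G.V → ℕ),
      (∀ v γ z, p v (ρ (𝒢.vtxIncl T v γ) z) = γ • p v z) ∧ (∀ v, p v (y v) = sn 𝒢 v) ∧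
      ∀ v' v g, (∃ (_ : v' = v) (γ : 𝒢.Gv v), g = 𝒢.vtxIncl T v γ) ∨
        (∃ (σ' : SS 𝒢 v') (σ : SS 𝒢 v), σ'.1 ≠ none ∧ σ.1 ≠ none ∧ ∀ z, p v' z = σ' ∨ p v (ρ g z) = σ) := by
  obtain ⟨ρ, p, y, h1, h2, h3⟩ := data_exists 𝒢 hcount T hT
  refine ⟨ρ, p, y, h1, h2, fun v' v g => ?_⟩
  obtain ⟨s, hs⟩ := Rd.exists hT v' g v
  rcases hs.pp ρ p h1 h3 with h | ⟨hs, σ', hσ', hz⟩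
  · exact Or.inl h
  · exact Or.inr ⟨σ', s, hσ', hs, fun z => or_iff_not_imp_left.2 (hz z)⟩

end BS2
end P4c

section P5
/-- The data needed for the assembly. -/
structure Dat where
  L : Type
  [gL : Group L]
  V : Type
  [fV : Finite V]
  Q : V → Type
  [gQ : ∀ v, Group (Q v)]
  i : ∀ v, Q v →* L
  S : V → Type
  [aS : ∀ v, MulAction (Q v) (S v)]
  Y : Type
  [aY : MulAction L Y]
  p : ∀ v, Y → S v
  y0 : Y
  y : V → Y
  N : ∀ v, S v → Prop
  hp : ∀ v (γ : Q v) z, p v (i v γ • z) = γ • p v z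
  hN : ∀ v (γ : Q v), ¬ N v (p v (i v γ • y v))
  pp : ∀ v' v g, (∃ (_ : v' = v) (γ : Q v), g = i v γ) ∨
    ∃ (σ' : S v') (σ : S v), N v' σ' ∧ N v σ ∧ ∀ z, p v' z = σ' ∨ p v (g • z) = σ
  A : ∀ v n, ((Fin (n + 1) → Q v) → ℝ) →ₗ[ℝ] ((Fin (n + 1) → S v) → ℝ)
  hA : ∀ v, IsOp (Q v) (A v)
  hA0 : ∀ v n f g, ¬ Function.Injective g → A v n f g = 0
  hA1 : ∀ v, ∀ u ∈ grpC (Q v) 1, A v 1 u = 0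

attribute [instance] Dat.gL Dat.fV Dat.gQ Dat.aS Dat.aY

namespace Dat
variable (D : Dat)

/-- Index set of cosets. -/
abbrev W : Type := Σ v : D.V, D.L ⧸ (D.i v).range

/-- Projection to a coset. -/
def pr (w : D.W) (z : D.Y) : D.S w.1 := D.p w.1 ((w.2.out)⁻¹ • z)

/-- The value at one coset. -/
def tm {n : ℕ} (F : ∀ v, (Fin (n + 1) → D.Q v) → ℝ) (t : Fin (n + 1) → D.Y) (w : D.W) : ℝ :=
  D.A w.1 n (F w.1) (fun j => D.pr w (t j))

/-- The assembled cochain. -/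
def Ph {n : ℕ} (F : ∀ v, (Fin (n + 1) → D.Q v) → ℝ) : (Fin (n + 1) → D.Y) → ℝ := fun t =>
  ∑ᶠ w : D.W, D.tm F t w

lemma uniq {n : ℕ} (hn : 2 ≤ n) (t : Fin (n + 1) → D.Y) (w w' : D.W)
    (h : Function.Injective (fun j => D.pr w (t j))) (h' : Function.Injective (fun j => D.pr w' (t j))) :
    w = w' := by
  obtain ⟨v, c⟩ := w
  obtain ⟨v', c'⟩ := w'
  rcases D.pp v' v (c.out⁻¹ * c'.out) with ⟨rfl, γ, hγ⟩ | ⟨σ', σ, -, -, hz⟩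
  · congr 1
    rw [← QuotientGroup.out_eq' c, ← QuotientGroup.out_eq' c', QuotientGroup.eq]
    exact ⟨γ, hγ.symm⟩
  · exfalso
    have h3 : ∀ j, D.pr ⟨v', c'⟩ (t j) = σ' ∨ D.pr ⟨v, c⟩ (t j) = σ := by
      intro j
      have := hz (c'.out⁻¹ • t j)
      rw [mul_smul, smul_inv_smul] at this
      exact this
    have n01 : (⟨0, by omega⟩ : Fin (n + 1)) ≠ ⟨1, by omega⟩ := by simp
    have n02 : (⟨0, by omega⟩ : Fin (n + 1)) ≠ ⟨2, by omega⟩ := by simp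
    have n12 : (⟨1, by omega⟩ : Fin (n + 1)) ≠ ⟨2, by omega⟩ := by simp
    have key : ∀ a b, a ≠ b → ¬ (D.pr ⟨v', c'⟩ (t a) = σ' ∧ D.pr ⟨v', c'⟩ (t b) = σ') :=
      fun a b hab hh => hab (h' (hh.1.trans hh.2.symm))
    have key' : ∀ a b, a ≠ b → ¬ (D.pr ⟨v, c⟩ (t a) = σ ∧ D.pr ⟨v, c⟩ (t b) = σ) :=
      fun a b hab hh => hab (h (hh.1.trans hh.2.symm))
    have a0 := h3 ⟨0, by omega⟩
    have a1 := h3 ⟨1, by omega⟩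
    have a2 := h3 ⟨2, by omega⟩
    have b1 := key _ _ n01
    have b2 := key _ _ n02
    have b3 := key _ _ n12
    have b4 := key' _ _ n01
    have b5 := key' _ _ n02
    have b6 := key' _ _ n12
    rcases a0 with a0 | a0 <;> rcases a1 with a1 | a1 <;> rcases a2 with a2 | a2
    · exact b1 ⟨a0, a1⟩
    · exact b1 ⟨a0, a1⟩
    · exact b2 ⟨a0, a2⟩
    · exact b6 ⟨a1, a2⟩
    · exact b3 ⟨a1, a2⟩
    · exact b5 ⟨a0, a2⟩
    · exact b4 ⟨a0, a1⟩
    · exact b4 ⟨a0, a1⟩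

lemma inj_of_ne {n : ℕ} {F : ∀ v, (Fin (n + 1) → D.Q v) → ℝ} {t : Fin (n + 1) → D.Y} {w : D.W}
    (h : D.tm F t w ≠ 0) : Function.Injective (fun j => D.pr w (t j)) := by
  by_contra h1
  exact h (D.hA0 _ _ _ _ h1)

lemma fin_supp {n : ℕ} (hn : 2 ≤ n) (F : ∀ v, (Fin (n + 1) → D.Q v) → ℝ) (t : Fin (n + 1) → D.Y) :
    (Function.support (D.tm F t)).Finite := by
  apply Set.Subsingleton.finite
  intro w hw w' hw'
  exact D.uniq hn t w w' (D.inj_of_ne hw) (D.inj_of_ne hw')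

lemma Ph_val {n : ℕ} (hn : 2 ≤ n) (F : ∀ v, (Fin (n + 1) → D.Q v) → ℝ) (t : Fin (n + 1) → D.Y) :
    D.Ph F t = 0 ∨ ∃ w, D.Ph F t = D.tm F t w := by
  by_cases h : ∃ w, D.tm F t w ≠ 0
  · obtain ⟨w, hw⟩ := h
    right
    refine ⟨w, finsum_eq_single _ w fun w' hw' => ?_⟩
    by_contra h1
    exact hw' (D.uniq hn t w' w (D.inj_of_ne h1) (D.inj_of_ne hw))
  · push Not at h
    left
    unfold Ph
    simp [h]

lemma Ph_bound {n : ℕ} (hn : 2 ≤ n) (F : ∀ v, (Fin (n + 1) → D.Q v) → ℝ) {C : ℝ} (hC0 : 0 ≤ C)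
    (hC : ∀ v s, |F v s| ≤ C) (t : Fin (n + 1) → D.Y) : |D.Ph F t| ≤ C := by
  rcases D.Ph_val hn F t with h | ⟨w, h⟩
  · rw [h]; simpa using hC0
  · rw [h]; exact (D.hA w.1).bound n _ C (hC w.1) _

lemma Ph_add {n : ℕ} (hn : 2 ≤ n) (F F' : ∀ v, (Fin (n + 1) → D.Q v) → ℝ) : D.Ph (F + F') = D.Ph F + D.Ph F' := by
  funext t
  show _ = D.Ph F t + D.Ph F' t
  unfold Ph
  rw [← finsum_add_distrib (D.fin_supp hn F t) (D.fin_supp hn F' t)]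
  congr 1
  funext w
  simp [tm]

lemma Ph_smul {n : ℕ} (hn : 2 ≤ n) (r : ℝ) (F : ∀ v, (Fin (n + 1) → D.Q v) → ℝ) : D.Ph (r • F) = r • D.Ph F := by
  funext t
  show _ = r • D.Ph F t
  unfold Ph
  rw [smul_finsum' _ (D.fin_supp hn F t)]
  congr 1
  funext w
  simp [tm]

lemma Ph_inv {n : ℕ} (F : ∀ v, (Fin (n + 1) → D.Q v) → ℝ) (hF : ∀ v, F v ∈ grpC (D.Q v) n) :
    D.Ph F ∈ invF D.L D.Y n := by
  intro g t
  let E : D.W ≃ D.W := Equiv.sigmaCongrRight fun v => MulAction.toPerm (g⁻¹)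
  unfold Ph
  rw [← finsum_comp_equiv E (f := D.tm F t)]
  congr 1
  funext w
  obtain ⟨v, c⟩ := w
  have h1 : (g⁻¹ * c.out)⁻¹ * (g⁻¹ • c).out ∈ (D.i v).range := by
    rw [← QuotientGroup.eq, QuotientGroup.out_eq']
    conv_rhs => rw [← QuotientGroup.out_eq' c]
    rfl
  obtain ⟨γ, hγ⟩ := h1
  have h2 : (g⁻¹ • c).out⁻¹ = D.i v γ⁻¹ * (c.out⁻¹ * g) := by
    rw [map_inv, hγ]; group
  have hi := (D.hA v).inv (f := F v) (hF v).1 (hF v).2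
  show D.A v n (F v) (fun j => D.p v (c.out⁻¹ • g • t j)) = D.A v n (F v) (fun j => D.p v ((g⁻¹ • c).out⁻¹ • t j))
  rw [h2]
  simp only [mul_smul, D.hp]
  exact (hi γ⁻¹ _).symm

lemma Ph_cob {n : ℕ} (hn : 2 ≤ n) (F : ∀ v, (Fin (n + 1) → D.Q v) → ℝ) :
    gcob D.Y n (D.Ph F) = D.Ph (fun v => gcob (D.Q v) n (F v)) := by
  funext t
  rw [gcob_apply]
  unfold Ph
  have h1 : ∀ j : Fin (n + 2), (-1 : ℝ) ^ (j : ℕ) * ∑ᶠ w, D.tm F (t ∘ j.succAbove) w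
      = ∑ᶠ w, (-1 : ℝ) ^ (j : ℕ) * D.tm F (t ∘ j.succAbove) w := fun j =>
    mul_finsum' _ _ (D.fin_supp hn F _)
  simp only [h1]
  rw [← finsum_sum_comm]
  · congr 1
    funext w
    have := congrFun ((D.hA w.1).comm n (F w.1)) (fun j => D.pr w (t j))
    rw [gcob_apply] at this
    exact this
  · intro j _
    refine (D.fin_supp hn F (t ∘ j.succAbove)).subset ?_
    intro w hw
    exact right_ne_zero_of_mul hw

lemma Ph_at {n : ℕ} (hn : 2 ≤ n) (F : ∀ v, (Fin (n + 1) → D.Q v) → ℝ) (hF : ∀ v, F v ∈ grpC (D.Q v) n)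
    (v : D.V) (γ : Fin (n + 1) → D.Q v) :
    D.Ph F (fun j => D.i v (γ j) • D.y v) = D.A v n (F v) (fun j => γ j • D.p v (D.y v)) := by
  unfold Ph
  rw [finsum_eq_single _ (⟨v, ((1 : D.L) : D.L ⧸ (D.i v).range)⟩ : D.W)]
  · have h1 : (1 : D.L)⁻¹ * ((1 : D.L) : D.L ⧸ (D.i v).range).out ∈ (D.i v).range := by
      rw [← QuotientGroup.eq, QuotientGroup.out_eq']
    obtain ⟨δ, hδ⟩ := h1
    rw [inv_one, one_mul] at hδ
    have hi := (D.hA v).inv (f := F v) (hF v).1 (hF v).2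
    show D.A v n (F v) (fun j => D.p v (((1 : D.L) : D.L ⧸ (D.i v).range).out⁻¹ • D.i v (γ j) • D.y v)) = _
    rw [← hδ, ← map_inv]
    simp only [D.hp]
    exact hi δ⁻¹ _
  · rintro ⟨v', c⟩ hne
    rcases D.pp v' v c.out with ⟨rfl, δ, hδ⟩ | ⟨σ', σ, h1, h2, hz⟩
    · exfalso
      apply hne
      congr 1
      rw [← QuotientGroup.out_eq' c, eq_comm, QuotientGroup.eq, inv_one, one_mul]
      exact ⟨δ, hδ.symm⟩
    · apply D.hA0
      intro hinj
      have h3 : ∀ j, D.pr ⟨v', c⟩ (D.i v (γ j) • D.y v) = σ' := by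
        intro j
        rcases hz (c.out⁻¹ • D.i v (γ j) • D.y v) with h | h
        · exact h
        · rw [smul_inv_smul] at h
          exact (D.hN v (γ j) (h ▸ h2)).elim
      have n01 : (⟨0, by omega⟩ : Fin (n + 1)) ≠ ⟨1, by omega⟩ := by simp
      exact n01 (hinj ((h3 _).trans (h3 _).symm))

/-- Pullback to the group. -/
def orb (n : ℕ) (f : (Fin (n + 1) → D.Y) → ℝ) : (Fin (n + 1) → D.L) → ℝ := fun g => f (fun j => g j • D.y0)

lemma fam_bd {n : ℕ} {F : ∀ v, (Fin (n + 1) → D.Q v) → ℝ} (hF : ∀ v, F v ∈ grpC (D.Q v) n) :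
    ∃ C, 0 ≤ C ∧ ∀ v s, |F v s| ≤ C := by
  choose C hC using fun v => (hF v).1
  obtain ⟨B, hB⟩ := (Set.finite_range C).bddAbove
  refine ⟨max B 0, le_max_right _ _, fun v s => (hC v s).trans ((hB ⟨v, rfl⟩).trans (le_max_left _ _))⟩

lemma orb_C {n : ℕ} (hn : 2 ≤ n) {F : ∀ v, (Fin (n + 1) → D.Q v) → ℝ} (hF : ∀ v, F v ∈ grpC (D.Q v) n) :
    D.orb n (D.Ph F) ∈ grpC D.L n := by
  obtain ⟨C, h0, hC⟩ := D.fam_bd hF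
  refine ⟨⟨C, fun g => D.Ph_bound hn F h0 hC _⟩, fun γ g => ?_⟩
  have := D.Ph_inv F hF γ (fun j => g j • D.y0)
  simp only [smul_smul] at this
  exact this

lemma Ph_zero {n : ℕ} : D.Ph (n := n) (fun v => 0) = 0 := by
  funext t
  simp [Ph, tm]

lemma Ph_Z {n : ℕ} (hn : 2 ≤ n) {F : ∀ v, (Fin (n + 1) → D.Q v) → ℝ} (hF : ∀ v, F v ∈ grpZ (D.Q v) n) :
    gcob D.Y n (D.Ph F) = 0 := by
  rw [D.Ph_cob hn]
  have : (fun v => gcob (D.Q v) n (F v)) = fun v => 0 := funext fun v => (hF v).2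
  rw [this, D.Ph_zero]

lemma orb_Z {n : ℕ} (hn : 2 ≤ n) {F : ∀ v, (Fin (n + 1) → D.Q v) → ℝ} (hF : ∀ v, F v ∈ grpZ (D.Q v) n) :
    D.orb n (D.Ph F) ∈ grpZ D.L n := by
  refine ⟨D.orb_C hn fun v => (hF v).1, ?_⟩
  funext g
  exact congrFun (D.Ph_Z hn hF) (fun j => g j • D.y0)

lemma orb_B {n : ℕ} (hn : 2 ≤ n) {F : ∀ v, (Fin (n + 1) → D.Q v) → ℝ} (hF : ∀ v, F v ∈ grpB (D.Q v) n) :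
    D.orb n (D.Ph F) ∈ grpB D.L n := by
  obtain ⟨m, rfl⟩ : ∃ m, n = m + 1 := ⟨n - 1, by omega⟩
  choose U hU hUF using hF
  have hFe : F = fun v => gcob (D.Q v) m (U v) := funext fun v => (hUF v).symm
  rcases Nat.lt_or_ge m 2 with hm | hm
  · obtain rfl : m = 1 := by omega
    have : D.Ph F = 0 := by
      funext t
      have : ∀ w, D.tm F t w = 0 := by
        intro w
        have h1 := (D.hA w.1).comm 1 (U w.1)
        rw [D.hA1 _ _ (hU _), map_zero] at h1
        show D.A w.1 (1 + 1) (F w.1) _ = 0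
        rw [hFe]
        rw [← h1]
        rfl
      simp [Ph, this]
    rw [this]
    exact Submodule.zero_mem _
  · refine ⟨D.orb m (D.Ph U), D.orb_C hm hU, ?_⟩
    rw [hFe, ← D.Ph_cob hm]
    rfl

lemma orb_res {n : ℕ} (hn : 2 ≤ n) {F : ∀ v, (Fin (n + 1) → D.Q v) → ℝ} (hF : ∀ v, F v ∈ grpZ (D.Q v) n) (v : D.V) :
    pbG (D.i v) n (D.orb n (D.Ph F)) - F v ∈ grpB (D.Q v) n := by
  obtain ⟨m, rfl⟩ : ∃ m, n = m + 1 := ⟨n - 1, by omega⟩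
  letI : MulAction (D.Q v) D.Y := MulAction.compHom D.Y (D.i v)
  have hsm : ∀ (γ : D.Q v) (z : D.Y), γ • z = D.i v γ • z := fun _ _ => rfl
  have h1 := homotopy_mem (Λ := D.Q v) (S := D.Y) D.y0
    (A := fun n => pbM (fun γ : D.Q v => γ • D.y0) n) (B := fun n => pbM (fun γ : D.Q v => γ • D.y v) n)
    (IsOp.pbM _ (fun γ x => by rw [smul_eq_mul, mul_smul])) (IsOp.pbM _ (fun γ x => by rw [smul_eq_mul, mul_smul]))
    (n := m) (f := D.Ph F)
    (by obtain ⟨C, h0, hC⟩ := D.fam_bd (fun v => (hF v).1)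
        exact ⟨C, fun g => D.Ph_bound hn F h0 hC _⟩)
    (fun γ t => D.Ph_inv F (fun v => (hF v).1) (D.i v γ) t) (D.Ph_Z hn hF)
  have h2 := homotopy_mem (Λ := D.Q v) (S := D.Q v) 1
    (A := fun n => (pbM (fun γ : D.Q v => γ • D.p v (D.y v)) n).comp (D.A v n)) (B := fun n => LinearMap.id)
    ((D.hA v).comp (IsOp.pbM _ (fun γ x => by rw [smul_eq_mul, mul_smul]))) (IsOp.id _ _)
    (n := m) (f := F v) (hF v).1.1 (hF v).1.2 (hF v).2
  have h3 : pbM (fun γ : D.Q v => γ • D.y v) (m + 1) (D.Ph F)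
      = (pbM (fun γ : D.Q v => γ • D.p v (D.y v)) (m + 1)).comp (D.A v (m + 1)) (F v) := by
    funext γ
    exact D.Ph_at hn F (fun v => (hF v).1) v γ
  have h4 := Submodule.add_mem _ h1 h2
  simp only [h3] at h4
  rw [sub_add_sub_cancel] at h4
  exact h4

end Dat
end P5

section P6
lemma supN_nonneg {X : Type*} (f : X → ℝ) : 0 ≤ supN f :=
  Real.sInf_nonneg fun _ h => h.1

lemma le_supN {X : Type*} {f : X → ℝ} (hf : f ∈ bd X) (x : X) : |f x| ≤ supN f := by
  obtain ⟨C, hC⟩ := hf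
  refine le_csInf ⟨max C 0, le_max_right _ _, fun s => (hC s).trans (le_max_left _ _)⟩ fun D hD => hD.2 x

lemma supN_le {X : Type*} {f : X → ℝ} {C : ℝ} (h0 : 0 ≤ C) (hC : ∀ x, |f x| ≤ C) : supN f ≤ C :=
  csInf_le ⟨0, fun _ h => h.1⟩ ⟨h0, hC⟩

section nrm
variable {Q R : Type*} [Group Q] [Group R]

lemma HbClass_surj {n : ℕ} (φ : Hb Q n) : ∃ f : grpZ Q n, HbClass f = φ :=
  Submodule.Quotient.mk_surjective _ φ

lemma HbClass_eq {n : ℕ} (f g : grpZ Q n) : HbClass f = HbClass g ↔ f.1 - g.1 ∈ grpB Q n :=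
  Submodule.Quotient.eq _

lemma hbNorm_nonneg {n : ℕ} (φ : Hb Q n) : 0 ≤ hbNorm φ := by
  apply Real.sInf_nonneg
  rintro r ⟨f, -, rfl⟩
  exact supN_nonneg _

lemma hbNorm_le {n : ℕ} (f : grpZ Q n) : hbNorm (HbClass f) ≤ supN f.1 := by
  refine csInf_le ⟨0, ?_⟩ ⟨f, rfl, rfl⟩
  rintro r ⟨f, -, rfl⟩
  exact supN_nonneg _

lemma hbNorm_near {n : ℕ} (φ : Hb Q n) {ε : ℝ} (hε : 0 < ε) :
    ∃ f : grpZ Q n, HbClass f = φ ∧ supN f.1 < hbNorm φ + ε := by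
  obtain ⟨f, hf⟩ := HbClass_surj φ
  obtain ⟨r, ⟨f', h1, rfl⟩, h2⟩ := exists_lt_of_csInf_lt
    (s := {r : ℝ | ∃ f : grpZ Q n, HbClass f = φ ∧ r = supN f.1}) ⟨_, f, hf, rfl⟩
    (show sInf _ < hbNorm φ + ε from lt_add_of_pos_right _ hε)
  exact ⟨f', h1, h2⟩

lemma hbRes_norm {n : ℕ} (i : Q →* R) (φ : Hb R n) : hbNorm (hbRes i n φ) ≤ hbNorm φ := by
  refine le_of_forall_pos_le_add fun ε hε => ?_
  obtain ⟨f, rfl, h2⟩ := hbNorm_near φ hε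
  refine le_trans ?_ h2.le
  have h3 : hbRes i n (HbClass f) = HbClass ⟨pbG i n f.1, pbG_mem_grpZ i n f.2⟩ := rfl
  rw [h3]
  refine (hbNorm_le _).trans (supN_le (supN_nonneg _) fun x => le_supN f.2.1.1 _)

lemma exists_sec (Q : Type*) [Group Q] (n : ℕ) : ∃ s : Hb Q n →ₗ[ℝ] grpZ Q n, ∀ φ, HbClass (s φ) = φ := by
  let mq : grpZ Q n →ₗ[ℝ] Hb Q n := Submodule.mkQ _
  obtain ⟨s, hs⟩ := mq.exists_rightInverse_of_surjective (LinearMap.range_eq_top.2 (Submodule.mkQ_surjective _))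
  exact ⟨s, fun φ => LinearMap.congr_fun hs φ⟩

lemma Hb_one_zero (f : (Fin 2 → Q) → ℝ) (hf : f ∈ grpZ Q 1) : f = 0 := by
  obtain ⟨⟨⟨C, hC⟩, hi⟩, hz⟩ := hf
  have hz' : ∀ a b c : Q, f ![b, c] - f ![a, c] + f ![a, b] = 0 := by
    intro a b c
    have h := congrFun (show gcob Q 1 f = 0 from hz) ![a, b, c]
    rw [gcob_apply, Fin.sum_univ_three] at h
    have e0 : (![a, b, c] : Fin 3 → Q) ∘ (0 : Fin 3).succAbove = ![b, c] := by
      funext j; fin_cases j <;> rfl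
    have e1 : (![a, b, c] : Fin 3 → Q) ∘ (1 : Fin 3).succAbove = ![a, c] := by
      funext j; fin_cases j <;> rfl
    have e2 : (![a, b, c] : Fin 3 → Q) ∘ (2 : Fin 3).succAbove = ![a, b] := by
      funext j; fin_cases j <;> rfl
    rw [e0, e1, e2] at h
    simpa [sub_eq_add_neg] using h
  have hi' : ∀ g a b : Q, f ![g * a, g * b] = f ![a, b] := by
    intro g a b
    rw [← hi g ![a, b]]
    congr 1
    funext j; fin_cases j <;> rfl
  have hp : ∀ (g : Q) (k : ℕ), f ![1, g ^ k] = k * f ![1, g] := by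
    intro g k
    induction k with
    | zero =>
      have := hz' 1 1 1
      simp at this ⊢
      exact this
    | succ k ih =>
      have h1 := hz' 1 (g ^ k) (g ^ (k + 1))
      have h2 := hi' (g ^ k) 1 g
      rw [mul_one, ← pow_succ] at h2
      rw [h2, ih] at h1
      push_cast
      linarith
  have h0 : ∀ g : Q, f ![1, g] = 0 := by
    intro g
    by_contra hne
    have hpos : 0 < |f ![1, g]| := abs_pos.2 hne
    obtain ⟨k, hk⟩ := exists_nat_gt (C / |f ![1, g]|)
    have h1 := hC ![1, g ^ k]
    rw [hp, abs_mul, Nat.abs_cast] at h1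
    rw [div_lt_iff₀ hpos] at hk
    linarith
  funext t
  have h1 := hi' (t 0) 1 ((t 0)⁻¹ * t 1)
  rw [h0, mul_one, mul_inv_cancel_left] at h1
  have h2 : t = ![t 0, t 1] := by
    funext j; fin_cases j <;> rfl
  rw [h2, h1]
  rfl

lemma Hb_one_sub (φ : Hb Q 1) : φ = 0 := by
  obtain ⟨f, rfl⟩ := HbClass_surj φ
  have : f = 0 := Subtype.ext (Hb_one_zero f.1 f.2)
  rw [this]
  rfl

lemma hbNorm_zero (n : ℕ) : hbNorm (0 : Hb Q n) = 0 := by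
  refine le_antisymm ?_ (hbNorm_nonneg _)
  have h : (0 : Hb Q n) = HbClass 0 := rfl
  rw [h]
  refine (hbNorm_le _).trans (supN_le le_rfl fun x => ?_)
  simp

end nrm

/-- The conclusion, abstractly. -/
lemma Dat.main (D : Dat) (n : ℕ) (hn : 1 ≤ n) :
    ∃ Θ : (∀ v : D.V, Hb (D.Q v) n) →ₗ[ℝ] Hb D.L n,
      (∀ φ : ∀ v : D.V, Hb (D.Q v) n, hbNorm (Θ φ) = ⨆ v : D.V, hbNorm (φ v)) ∧
      (∀ (φ : ∀ v : D.V, Hb (D.Q v) n) (v : D.V), hbRes (D.i v) n (Θ φ) = φ v) := by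
  rcases Nat.lt_or_ge n 2 with h2 | h2
  · obtain rfl : n = 1 := by omega
    refine ⟨0, fun φ => ?_, fun φ v => ?_⟩
    · have : φ = 0 := funext fun v => Hb_one_sub _
      subst this
      simp [hbNorm_zero]
    · rw [Hb_one_sub (φ v)]
      simp
  · choose s hs using fun v => exists_sec (D.Q v) n
    let Ze : (∀ v, grpZ (D.Q v) n) →ₗ[ℝ] grpZ D.L n :=
      { toFun := fun f => ⟨D.orb n (D.Ph fun v => (f v).1), D.orb_Z h2 fun v => (f v).2⟩
        map_add' := fun f g => by
          apply Subtype.ext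
          show D.orb n (D.Ph ((fun v => (f v).1) + fun v => (g v).1)) = _
          rw [D.Ph_add h2]
          rfl
        map_smul' := fun r f => by
          apply Subtype.ext
          show D.orb n (D.Ph (r • (fun v => (f v).1))) = _
          rw [D.Ph_smul h2]
          rfl }
    let mq : grpZ D.L n →ₗ[ℝ] Hb D.L n := Submodule.mkQ _
    let Θ : (∀ v : D.V, Hb (D.Q v) n) →ₗ[ℝ] Hb D.L n :=
      mq.comp (Ze.comp (LinearMap.pi fun v => (s v).comp (LinearMap.proj v)))
    have hΘ : ∀ (f : ∀ v, grpZ (D.Q v) n), Θ (fun v => HbClass (f v)) = HbClass (Ze f) := by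
      intro f
      have h1 : Θ (fun v => HbClass (f v)) = HbClass (Ze fun v => s v (HbClass (f v))) := rfl
      rw [h1, HbClass_eq]
      have h3 := D.orb_B h2 (F := fun v => (s v (HbClass (f v)) - f v).1)
        (fun v => (HbClass_eq _ _).1 (hs v _))
      have h4 : (Ze (fun v => s v (HbClass (f v)) - f v)).1 ∈ grpB D.L n := h3
      have h5 : (fun v => s v (HbClass (f v)) - f v) = (fun v => s v (HbClass (f v))) - f := rfl
      rw [h5, map_sub] at h4
      exact h4
    have hres : ∀ (φ : ∀ v : D.V, Hb (D.Q v) n) (v : D.V), hbRes (D.i v) n (Θ φ) = φ v := by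
      intro φ v
      choose f hf using fun v => HbClass_surj (φ v)
      obtain rfl : (fun v => HbClass (f v)) = φ := funext hf
      rw [hΘ]
      have h3 : hbRes (D.i v) n (HbClass (Ze f)) = HbClass ⟨pbG (D.i v) n (Ze f).1, pbG_mem_grpZ _ n (Ze f).2⟩ := rfl
      rw [h3, HbClass_eq]
      exact D.orb_res h2 (F := fun v => (f v).1) (fun v => (f v).2) v
    refine ⟨Θ, fun φ => le_antisymm ?_ ?_, hres⟩
    · refine le_of_forall_pos_le_add fun ε hε => ?_
      choose f hf hfε using fun v => hbNorm_near (φ v) hε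
      obtain rfl : (fun v => HbClass (f v)) = φ := funext hf
      rw [hΘ]
      have hC0 : 0 ≤ (⨆ v : D.V, hbNorm (HbClass (f v))) + ε :=
        add_nonneg (Real.iSup_nonneg fun v => hbNorm_nonneg _) hε.le
      refine (hbNorm_le _).trans (supN_le hC0 fun x => ?_)
      refine D.Ph_bound h2 _ hC0 (fun v t => ?_) _
      refine (le_supN (f v).2.1.1 t).trans ((hfε v).le.trans (add_le_add ?_ le_rfl))
      exact le_ciSup (f := fun v => hbNorm (HbClass (f v))) (Set.finite_range _).bddAbove v
    · refine Real.iSup_le (fun v => ?_) (hbNorm_nonneg _)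
      rw [← hres φ v]
      exact hbRes_norm _ _

section fin
variable {G : SerreGraph} (𝒢 : GraphOfGroups G)

lemma HH_mean (hamen : ∀ e : G.E, IsAmenable (𝒢.Ge e)) (v : G.V) (k : KK G v) :
    ∃ m : (𝒢.Gv v → ℝ) →ₗ[ℝ] ℝ, IsMean m ∧ ∀ h ∈ HH 𝒢 v k, ∀ f ∈ bd (𝒢.Gv v), m (fun x => f (h * x)) = m f := by
  cases k with
  | none =>
    refine ⟨LinearMap.proj 1, ⟨rfl, fun f C hC => hC 1⟩, fun h hh f hf => ?_⟩
    obtain rfl : h = 1 := hh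
    simp
  | some k =>
    obtain ⟨e, rfl⟩ := k
    obtain ⟨μ, hμ, hi⟩ := amenable_mean (hamen e)
    refine ⟨⟨⟨fun f => μ (fun x => f (𝒢.h e x)), fun f g => μ.map_add (fun x => f (𝒢.h e x)) (fun x => g (𝒢.h e x))⟩,
      fun c f => μ.map_smul c (fun x => f (𝒢.h e x))⟩, ⟨hμ.1, fun f C hC => hμ.2 _ C fun x => hC _⟩, ?_⟩
    intro h hh f hf
    obtain ⟨a, rfl⟩ : ∃ a, 𝒢.h e a = h := hh
    obtain ⟨C, hC⟩ := hf
    have := hi (fun x => f (𝒢.h e x)) ⟨C, fun x => hC _⟩ a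
    simp only [map_mul] at this
    exact this

lemma dat_exists [Fintype G.V] [Fintype G.E] (hcount : ∀ v : G.V, Countable (𝒢.Gv v))
    (hamen : ∀ e : G.E, IsAmenable (𝒢.Ge e)) (T : Set G.E) (hT : G.IsSpanningTree T) (n : ℕ) (hn : 1 ≤ n) :
    ∃ Θ : (∀ v : G.V, Hb (𝒢.Gv v) n) →ₗ[ℝ] Hb (𝒢.pi1 T) n,
      (∀ φ : ∀ v : G.V, Hb (𝒢.Gv v) n, hbNorm (Θ φ) = ⨆ v : G.V, hbNorm (φ v)) ∧
      (∀ (φ : ∀ v : G.V, Hb (𝒢.Gv v) n) (v : G.V),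
        hbRes (𝒢.vtxIncl T v) n (Θ φ) = φ v) := by
  obtain ⟨ρ, p, y, h1, h2, h3⟩ := pp_exists 𝒢 hcount T hT
  choose M hM hMe using fun v => means_exist (𝒢.Gv v) (KK G v) (HH 𝒢 v) (HH_mean 𝒢 hamen v)
  choose A hA hA0 hA1 using fun v => ext_exists (𝒢.Gv v) (SS 𝒢 v) (M v) (hM v) (hMe v)
  let _ : MulAction (𝒢.pi1 T) ℕ := MulAction.compHom ℕ ρ
  have hsm : ∀ (g : 𝒢.pi1 T) (z : ℕ), g • z = ρ g z := fun _ _ => rfl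
  exact Dat.main { L := 𝒢.pi1 T, V := G.V, Q := 𝒢.Gv, i := 𝒢.vtxIncl T, S := SS 𝒢, Y := ℕ, p := p, y0 := 0, y := y
                   N := fun v s => s.1 ≠ none
                   hp := h1
                   hN := fun v γ h => h (by rw [hsm, h1, h2]; rfl)
                   pp := h3, A := A, hA := hA, hA0 := hA0, hA1 := hA1 : Dat } n hn
end fin
end P6

open GraphOfGroups in
/-- **Theorem A (Bucher–Burger–Frigerio–Iozzi–Pagliantini–Pozzetti).**
Let `Γ = π₁(𝒢, T)` be the fundamental group of a graph of groups `𝒢` based on a finite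
graph `G` (with spanning tree `T`). Suppose that every vertex group of `𝒢` is countable
and that every edge group of `𝒢` is amenable. Then for every `n ≥ 1` there is a linear
map `Θ : ⊕_{v ∈ V(G)} H_b^n(Γ_v) → H_b^n(Γ)` which is an isometric embedding with respect
to the max-norm on the direct sum, and which is a right inverse of the map
`⊕_{v} H(i_v) : H_b^n(Γ) → ⊕_{v ∈ V(G)} H_b^n(Γ_v)` induced by the canonical inclusions
`i_v : Γ_v → Γ`. -/
theorem isometric_embedding_of_graph_of_groups
    (G : SerreGraph) [Fintype G.V] [Fintype G.E]
    (𝒢 : GraphOfGroups G)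
    (hcount : ∀ v : G.V, Countable (𝒢.Gv v))
    (hamen : ∀ e : G.E, IsAmenable (𝒢.Ge e))
    (T : Set G.E) (hT : G.IsSpanningTree T)
    (n : ℕ) (hn : 1 ≤ n) :
    ∃ Θ : (∀ v : G.V, Hb (𝒢.Gv v) n) →ₗ[ℝ] Hb (𝒢.pi1 T) n,
      (∀ φ : ∀ v : G.V, Hb (𝒢.Gv v) n, hbNorm (Θ φ) = ⨆ v : G.V, hbNorm (φ v)) ∧
      (∀ (φ : ∀ v : G.V, Hb (𝒢.Gv v) n) (v : G.V),
        hbRes (𝒢.vtxIncl T v) n (Θ φ) = φ v) := by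
  exact dat_exists 𝒢 hcount hamen T hT n hn

end GrpBC
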